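/- The map R ↦ g, defined by g_{μν}(x) := ∑_a e^a_μ(x) e^a_ν(x) where e^a_μ(x) := δ^a_μ + ∫₀¹ t(1−t) ∑_{b,ρ} x^b x^ρ R^a_{bρμ}(tx) dt, is a bijection from the set of smooth maps R : ℝⁿ → (Fin n → Fin n → Matrix (Fin n) (Fin n) ℝ), written R^a_{bμν}(x), satisfying R^a_{bμν} = −R^a_{bνμ}, R^a_{bμν} = −R^b_{aμν}, the 1st Bianchi identity for curvature (∑_b (R^a_{bμν} e^b_ρ + R^a_{bνρ} e^b_μ + R^a_{bρμ} e^b_ν) = 0 with e given by the displayed formula) and the 2nd Bianchi identity for curvature (∂_μ R^a_{bνρ} + ∂_ν R^a_{bρμ} + ∂_ρ R^a_{bμν} + ∑_c (ω^a_{cμ} R^c_{bνρ} − R^a_{cνρ} ω^c_{bμ} + ω^a_{cν} R^c_{bρμ} − R^a_{cρμ} ω^c_{bν} + ω^a_{cρ} R^c_{bμν} − R^a_{cμν} ω^c_{bρ}) = 0, where ω^a_{bμ}(x) := ∫₀¹ t ∑_ν x^ν R^a_{bνμ}(tx) dt), and for which the associated e(x) is invertible for every x, onto the set of metrics in normal coordinates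 arising this way, i.e. smooth symmetric positive-definite g : ℝⁿ → Matrix (Fin n) (Fin n) ℝ with ∑_μ x^μ g_{μν}(x) = x^ν that equal ∑_a e^a_μ e^a_ν for a vielbein e satisfying conditions (one), (two) and (three). -/

import Mathlib

/-- The partial derivative `∂_μ f` of a real-valued function on `ℝⁿ`. -/
noncomputable def pd {n : ℕ} (μ : Fin n) (f : (Fin n → ℝ) → ℝ) (x : Fin n → ℝ) : ℝ :=
  fderiv ℝ f x (Pi.single μ 1)

/-- The spin-connection associated to a curvature `R` by the radial integral formula
`ω^a_{bμ}(x) = ∫₀¹ t ∑_ν x^ν R^a_{bνμ}(tx) dt`; `ωOf R x μ a b = ω^a_{bμ}(x)`. -/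
noncomputable def ωOf {n : ℕ}
    (R : (Fin n → ℝ) → Fin n → Fin n → Matrix (Fin n) (Fin n) ℝ) :
    (Fin n → ℝ) → Fin n → Matrix (Fin n) (Fin n) ℝ :=
  fun x μ => Matrix.of fun a b =>
    ∫ t in (0:ℝ)..1, t • ∑ ν, x ν * R (t • x) ν μ a b

/-- The vielbein associated to a curvature `R` by the radial integral formula
`e^a_μ(x) = δ^a_μ + ∫₀¹ t(1−t) ∑_{b,ν} x^b x^ν R^a_{bνμ}(tx) dt`;
`eOf R x a μ = e^a_μ(x)`. -/
noncomputable def eOf {n : ℕ}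
    (R : (Fin n → ℝ) → Fin n → Fin n → Matrix (Fin n) (Fin n) ℝ) :
    (Fin n → ℝ) → Matrix (Fin n) (Fin n) ℝ :=
  fun x => Matrix.of fun a μ =>
    (1 : Matrix (Fin n) (Fin n) ℝ) a μ
      + ∫ t in (0:ℝ)..1, (t * (1 - t)) • ∑ b, ∑ ν, x b * x ν * R (t • x) ν μ a b

/-- The metric associated to a curvature `R`: `g_{μν} = ∑_a e^a_μ e^a_ν` with `e = eOf R`. -/
noncomputable def metOf {n : ℕ}
    (R : (Fin n → ℝ) → Fin n → Fin n → Matrix (Fin n) (Fin n) ℝ) :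
    (Fin n → ℝ) → Matrix (Fin n) (Fin n) ℝ :=
  fun x => Matrix.of fun μ ν => ∑ a, eOf R x a μ * eOf R x a ν

/-- The set of smooth curvatures `R` (written `R x μ ν a b = R^a_{bμν}(x)`), antisymmetric
in the 2-form indices and in the matrix indices, satisfying the 1st and 2nd Bianchi
identities for curvature (with `ω = ωOf R` and `e = eOf R` given by the radial integral
formulas), and whose associated vielbein `eOf R` is invertible at every point. -/
def CurvatureSet (n : ℕ) :
    Set ((Fin n → ℝ) → Fin n → Fin n → Matrix (Fin n) (Fin n) ℝ) :=
  {R | (∀ μ ν a b, ContDiff ℝ (⊤ : ℕ∞) fun x => R x μ ν a b)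
    ∧ (∀ (x : Fin n → ℝ) μ ν a b, R x μ ν a b = - R x ν μ a b)
    ∧ (∀ (x : Fin n → ℝ) μ ν a b, R x μ ν a b = - R x μ ν b a)
    ∧ (∀ (x : Fin n → ℝ) μ ν ρ a,
      ∑ b, (R x μ ν a b * eOf R x b ρ + R x ν ρ a b * eOf R x b μ
        + R x ρ μ a b * eOf R x b ν) = 0)
    ∧ (∀ (x : Fin n → ℝ) μ ν ρ a b,
      pd μ (fun y => R y ν ρ a b) x + pd ν (fun y => R y ρ μ a b) x
        + pd ρ (fun y => R y μ ν a b) x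
        + ∑ c, (ωOf R x μ a c * R x ν ρ c b - R x ν ρ a c * ωOf R x μ c b
          + ωOf R x ν a c * R x ρ μ c b - R x ρ μ a c * ωOf R x ν c b
          + ωOf R x ρ a c * R x μ ν c b - R x μ ν a c * ωOf R x ρ c b) = 0)
    ∧ (∀ x : Fin n → ℝ, IsUnit (eOf R x))}

/-- The set of smooth symmetric positive-definite metrics in normal coordinates
(`g x μ ν = g_{μν}(x)`, `∑_μ x^μ g_{μν}(x) = x^ν`) that arise as `g_{μν} = ∑_a e^a_μ e^a_ν`
for some smooth pointwise-invertible vielbein `e` satisfying conditions (one), (two) and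
(three), with inverse matrix entries `e_a^μ(x) = (e x)⁻¹ μ a`. -/
def NormalMetricSet (n : ℕ) : Set ((Fin n → ℝ) → Matrix (Fin n) (Fin n) ℝ) :=
  {g | (∀ μ ν, ContDiff ℝ (⊤ : ℕ∞) fun x => g x μ ν)
    ∧ (∀ (x : Fin n → ℝ) μ ν, g x μ ν = g x ν μ)
    ∧ (∀ x : Fin n → ℝ, (g x).PosDef)
    ∧ (∀ (x : Fin n → ℝ) ν, ∑ μ, x μ * g x μ ν = x ν)
    ∧ ∃ e : (Fin n → ℝ) → Matrix (Fin n) (Fin n) ℝ,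
      (∀ a μ, ContDiff ℝ (⊤ : ℕ∞) fun x => e x a μ)
      ∧ (∀ x : Fin n → ℝ, IsUnit (e x))
      ∧ (∀ (x : Fin n → ℝ) a, ∑ μ, x μ * e x a μ = x a)
      ∧ (∀ (x : Fin n → ℝ) μ, ∑ a, x a * e x a μ = x μ)
      ∧ (∀ (x : Fin n → ℝ) a b,
        ∑ μ, (e x)⁻¹ μ a * ((∑ ν, x ν * pd ν (fun y => e y b μ) x) + e x b μ)
          = ∑ μ, (e x)⁻¹ μ b * ((∑ ν, x ν * pd ν (fun y => e y a μ) x) + e x a μ))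
      ∧ (∀ (x : Fin n → ℝ) μ ν, g x μ ν = ∑ a, e x a μ * e x a ν)}

/-
Write `ι_x` for contraction with the position vector. In the radial gauge `ι_x ω = 0`, `e x = x`,
the structure equations contracted with `x` become Euler equations
`x ^ μ ∂_μ ω + ω = ι_x R` and `x ^ μ ∂_μ e + e = 1 + ω x`, where `(ω x) ^ a_μ = ω ^ a_{bμ} x ^ b`.
Their unique smooth solutions are the radial integrals `ωOf R` and `eOf R`. When `R` satisfies the
Bianchi identities, the torsion of this pair is a covariantly closed two-form `B` with
`ι_x B = 0`, and so is the difference between the curvature of `ωOf R` and `R`; such a `B` satisfies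
`x ^ μ ∂_μ B + 2 B = 0` and therefore vanishes. Curvatures thus correspond to smooth torsion-free
metric connections with vielbein in radial gauge, and the connection is the Levi-Civita connection
of `e`, whose radial gauge condition is condition (three). Finally `eᵀ e` determines `e`: an
orthogonal transition matrix between two such vielbeins has vanishing radial derivative and is `1`
at the origin.
-/

open scoped ContDiff Matrix Matrix.Norms.Operator

section RadialCalculus

variable {E F : Type*} [NormedAddCommGroup E] [NormedSpace ℝ E]
  [NormedAddCommGroup F] [NormedSpace ℝ F]

/-- The Euler operator `x ^ μ ∂_μ f`, i.e. the derivative of `f` at `x` along the position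
vector `x`. -/
noncomputable def radialDeriv (f : E → F) (x : E) : F := fderiv ℝ f x x

/-- The average of `f` over the segment from the origin to `x`. It inverts `f ↦ radialDeriv f + f`
on smooth functions. -/
noncomputable def radialAverage (f : E → F) (x : E) : F := ∫ t in (0 : ℝ)..1, f (t • x)

theorem radialDeriv_add {f g : E → F} {x : E} (hf : DifferentiableAt ℝ f x)
    (hg : DifferentiableAt ℝ g x) : radialDeriv (f + g) x = radialDeriv f x + radialDeriv g x :=
  congrArg (· x) (fderiv_add hf hg)

theorem radialDeriv_sub {f g : E → F} {x : E} (hf : DifferentiableAt ℝ f x)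
    (hg : DifferentiableAt ℝ g x) : radialDeriv (f - g) x = radialDeriv f x - radialDeriv g x :=
  congrArg (· x) (fderiv_sub hf hg)

theorem hasDerivAt_comp_smul {f : E → F} (hf : Differentiable ℝ f) (x : E) (s : ℝ) :
    HasDerivAt (fun t : ℝ => f (t • x)) (fderiv ℝ f (s • x) x) s := by
  simpa only [one_smul] using!
    (hf (s • x)).hasFDerivAt.comp_hasDerivAt s ((hasDerivAt_id s).smul_const x)

theorem smul_fderiv_smul_eq_radialDeriv (f : E → F) (x : E) (s : ℝ) :
    s • fderiv ℝ f (s • x) x = radialDeriv f (s • x) :=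
  ((fderiv ℝ f (s • x)).map_smul s x).symm

theorem eq_zero_of_radialDeriv_add_smul_eq_zero {f : E → F} (hf : Differentiable ℝ f) (k : ℕ)
    (h : ∀ x, radialDeriv f x + (k + 1 : ℝ) • f x = 0) : f = 0 := by
  funext x
  have hderiv (s : ℝ) : HasDerivAt (fun t : ℝ => t ^ (k + 1) • f (t • x)) 0 s := by
    refine ((hasDerivAt_pow (k + 1) s).smul (hasDerivAt_comp_smul hf x s)).congr_deriv ?_
    calc s ^ (k + 1) • fderiv ℝ f (s • x) x + (((k + 1 : ℕ) : ℝ) * s ^ k) • f (s • x)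
        = s ^ k • (radialDeriv f (s • x) + (k + 1 : ℝ) • f (s • x)) := by
          rw [← smul_fderiv_smul_eq_radialDeriv]
          push_cast
          module
      _ = 0 := by rw [h, smul_zero]
  simpa using is_const_of_deriv_eq_zero (fun s => (hderiv s).differentiableAt)
    (fun s => (hderiv s).deriv) 1 0

theorem eq_apply_zero_of_radialDeriv_eq_zero {f : E → F} (hf : ContDiff ℝ 1 f)
    (h : ∀ x, radialDeriv f x = 0) (x : E) : f x = f 0 := by
  have hd : Differentiable ℝ f := hf.differentiable one_ne_zero
  have hcont : Continuous fun s : ℝ => fderiv ℝ f (s • x) x := by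
    have := hf.continuous_fderiv one_ne_zero
    fun_prop
  have hzero : (fun s : ℝ => fderiv ℝ f (s • x) x) = fun _ => 0 := by
    refine hcont.ext_on (dense_compl_singleton 0) continuous_const fun s hs => ?_
    have := smul_fderiv_smul_eq_radialDeriv f x s
    rw [h] at this
    exact (smul_eq_zero.1 this).resolve_left hs
  have hderiv (s : ℝ) : HasDerivAt (fun t : ℝ => f (t • x)) 0 s :=
    (hasDerivAt_comp_smul hd x s).congr_deriv (congrFun hzero s)
  simpa using is_const_of_deriv_eq_zero (fun s => (hderiv s).differentiableAt)
    (fun s => (hderiv s).deriv) 1 0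

theorem eq_of_radialDeriv_add_self_eq {f g : E → F} (hf : Differentiable ℝ f)
    (hg : Differentiable ℝ g) (h : ∀ x, radialDeriv f x + f x = radialDeriv g x + g x) :
    f = g := by
  refine sub_eq_zero.1 (eq_zero_of_radialDeriv_add_smul_eq_zero (hf.sub hg) 0 fun x => ?_)
  rw [radialDeriv_sub (hf x) (hg x), Pi.sub_apply, Nat.cast_zero, zero_add, one_smul,
    sub_add_sub_comm, h, sub_self]

theorem radialAverage_clm_comp [CompleteSpace F] {G : Type*} [NormedAddCommGroup G]
    [NormedSpace ℝ G] [CompleteSpace G] (L : F →L[ℝ] G) {f : E → F} (hf : Continuous f) (x : E) :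
    radialAverage (fun y => L (f y)) x = L (radialAverage f x) :=
  L.intervalIntegral_comp_comm
    ((by fun_prop : Continuous fun t : ℝ => f (t • x)).intervalIntegrable _ _)

end RadialCalculus

section RadialIntegrals

universe u

-- Differentiating under the integral replaces `F` by `E →L[ℝ] F`, so both live in one universe.
variable {E F : Type u} [NormedAddCommGroup E] [NormedSpace ℝ E]
  [NormedAddCommGroup F] [NormedSpace ℝ F] [ProperSpace E]

theorem hasFDerivAt_integral_pow_smul_comp_smul {h : E → F} (hh : ContDiff ℝ 1 h)
    (k : ℕ) (x : E) :
    HasFDerivAt (fun y => ∫ t in (0 : ℝ)..1, t ^ k • h (t • y))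
      (∫ t in (0 : ℝ)..1, t ^ (k + 1) • fderiv ℝ h (t • x)) x := by
  have hcont : Continuous h := hh.continuous
  have hcont' : Continuous (fderiv ℝ h) := hh.continuous_fderiv one_ne_zero
  have hint {G : Type u} [NormedAddCommGroup G] [NormedSpace ℝ G] {f : E → G} (hf : Continuous f)
      (y : E) (j : ℕ) : Continuous fun t : ℝ => t ^ j • f (t • y) := by
    fun_prop
  obtain ⟨C, hC⟩ := (isCompact_closedBall (0 : E) (‖x‖ + 1)).exists_bound_of_continuousOn
    hcont'.continuousOn
  refine intervalIntegral.hasFDerivAt_integral_of_dominated_of_fderiv_le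
    (F := fun y t => t ^ k • h (t • y)) (F' := fun y t => t ^ (k + 1) • fderiv ℝ h (t • y))
    (bound := fun _ => C) (Metric.ball_mem_nhds x one_pos)
    (.of_forall fun y => (hint hcont y k).aestronglyMeasurable)
    ((hint hcont x k).intervalIntegrable _ _) (hint hcont' x (k + 1)).aestronglyMeasurable
    (.of_forall fun t ht y hy => ?bound) intervalIntegrable_const
    (.of_forall fun t _ y _ => ?deriv)
  case bound =>
    obtain ⟨ht0, ht1⟩ : 0 < t ∧ t ≤ 1 := by rwa [Set.uIoc_of_le zero_le_one] at ht
    have hy_norm : ‖y‖ ≤ ‖x‖ + 1 := by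
      linarith [norm_le_norm_add_norm_sub x y, norm_sub_rev x y, mem_ball_iff_norm.1 hy]
    have hty : ‖t • y‖ ≤ ‖x‖ + 1 := by
      rw [norm_smul, Real.norm_of_nonneg ht0.le]
      exact (mul_le_of_le_one_left (norm_nonneg y) ht1).trans hy_norm
    calc ‖t ^ (k + 1) • fderiv ℝ h (t • y)‖
        = t ^ (k + 1) * ‖fderiv ℝ h (t • y)‖ := by
          rw [norm_smul, Real.norm_of_nonneg (pow_nonneg ht0.le _)]
      _ ≤ ‖fderiv ℝ h (t • y)‖ :=
          mul_le_of_le_one_left (norm_nonneg _) (pow_le_one₀ ht0.le ht1)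
      _ ≤ C := hC _ (mem_closedBall_zero_iff.2 hty)
  case deriv =>
    have hsmul : HasFDerivAt (fun y : E => t • y) (t • ContinuousLinearMap.id ℝ E) y :=
      (hasFDerivAt_id y).const_smul t
    refine ((((hh.differentiable one_ne_zero) (t • y)).hasFDerivAt.comp y hsmul).const_smul
      (t ^ k)).congr_fderiv ?_
    ext v
    simp [pow_succ, smul_smul]

theorem contDiff_integral_pow_smul_comp_smul {h : E → F} (hh : ContDiff ℝ ∞ h)
    (k m : ℕ) : ContDiff ℝ m fun y => ∫ t in (0 : ℝ)..1, t ^ k • h (t • y) := by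
  induction m generalizing F k with
  | zero =>
    rw [Nat.cast_zero, contDiff_zero, continuous_iff_continuousAt]
    exact fun x => (hasFDerivAt_integral_pow_smul_comp_smul (hh.of_le (by simp)) k x).continuousAt
  | succ m ih =>
    have hderiv := hasFDerivAt_integral_pow_smul_comp_smul (hh.of_le (by simp)) k
    rw [Nat.cast_add, Nat.cast_one, contDiff_succ_iff_fderiv]
    refine ⟨fun x => (hderiv x).differentiableAt, by simp, ?_⟩
    rw [funext fun x => (hderiv x).fderiv]
    exact ih (hh.fderiv_right (by simp)) (k + 1)

theorem contDiff_radialAverage {f : E → F} (hf : ContDiff ℝ ∞ f) :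
    ContDiff ℝ ∞ (radialAverage f) :=
  contDiff_infty.2 fun m => by
    simpa only [pow_zero, one_smul] using! contDiff_integral_pow_smul_comp_smul hf 0 m

theorem radialDeriv_radialAverage_add_self [CompleteSpace F] {f : E → F}
    (hf : ContDiff ℝ ∞ f) (x : E) : radialDeriv (radialAverage f) x + radialAverage f x = f x := by
  have hcont : Continuous fun t : ℝ => f (t • x) := by
    have := hf.continuous
    fun_prop
  have hscale : (fun s : ℝ => s • radialAverage f (s • x)) =
      fun s => ∫ t in (0 : ℝ)..s, f (t • x) := by
    funext s
    simpa only [radialAverage, smul_smul, mul_comm s, mul_zero, mul_one, zero_mul, one_mul] using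
      intervalIntegral.smul_integral_comp_mul_left (fun t => f (t • x)) (a := 0) (b := 1) s
  have hproduct := (hasDerivAt_id' (1 : ℝ)).fun_smul
    (hasDerivAt_comp_smul ((contDiff_radialAverage hf).differentiable (by simp)) x 1)
  have hftc : HasDerivAt (fun s : ℝ => ∫ t in (0 : ℝ)..s, f (t • x)) (f ((1 : ℝ) • x)) 1 :=
    intervalIntegral.integral_hasDerivAt_right (hcont.intervalIntegrable _ _)
      (hcont.stronglyMeasurableAtFilter _ _) hcont.continuousAt
  rw [hscale] at hproduct
  simpa only [radialDeriv, one_smul] using hproduct.unique hftc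

end RadialIntegrals

section MatrixCongruence

variable {m α : Type*} [Fintype m] [DecidableEq m] [CommRing α]

theorem transpose_mul_mul_eq_zero_iff {P A : Matrix m m α} (hP : IsUnit P) :
    Pᵀ * A * P = 0 ↔ A = 0 := by
  rw [hP.mul_left_eq_zero, ((Matrix.isUnit_transpose P).2 hP).mul_right_eq_zero]

theorem isSymm_mul_inv_iff {P N : Matrix m m α} (hP : IsUnit P) :
    (N * P⁻¹).IsSymm ↔ (Pᵀ * N).IsSymm := by
  have hcongr : Pᵀ * ((N * P⁻¹)ᵀ - N * P⁻¹) * P = (Pᵀ * N)ᵀ - Pᵀ * N := by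
    have hcancel : N * P⁻¹ * P = N :=
      Matrix.nonsing_inv_mul_cancel_right _ _ ((Matrix.isUnit_iff_isUnit_det _).1 hP)
    rw [Matrix.mul_sub, Matrix.sub_mul, ← Matrix.transpose_mul, hcancel, Matrix.mul_assoc, hcancel,
      Matrix.transpose_mul, Matrix.transpose_transpose]
  rw [Matrix.IsSymm, Matrix.IsSymm, ← sub_eq_zero, ← transpose_mul_mul_eq_zero_iff hP, hcongr,
    sub_eq_zero]

end MatrixCongruence

section MatrixCalculus

variable {E : Type*} [NormedAddCommGroup E] [NormedSpace ℝ E]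
  {l m k : Type*} [Fintype l] [Fintype m] [Fintype k] {r : WithTop ℕ∞}

theorem contDiff_matrix_iff {M : E → Matrix m k ℝ} :
    ContDiff ℝ r M ↔ ∀ i j, ContDiff ℝ r fun x => M x i j := by
  rw [← (Matrix.ofLinearEquiv ℝ).symm.toContinuousLinearEquiv.comp_contDiff_iff, contDiff_pi]
  exact forall_congr' fun i => contDiff_pi

theorem differentiable_matrix_iff {M : E → Matrix m k ℝ} :
    Differentiable ℝ M ↔ ∀ i j, Differentiable ℝ fun x => M x i j :=
  (Matrix.ofLinearEquiv ℝ).symm.toContinuousLinearEquiv.comp_differentiable_iff.symm.trans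
    (differentiable_pi.trans (forall_congr' fun _ => differentiable_pi))

theorem fderiv_matrix_apply {M : E → Matrix m k ℝ} {x : E} (hM : DifferentiableAt ℝ M x) (v : E)
    (i : m) (j : k) : fderiv ℝ (fun y => M y i j) x v = fderiv ℝ M x v i j :=
  congrArg (· v) (((Matrix.entryLinearMap ℝ ℝ i j).toContinuousLinearMap.hasFDerivAt.comp x
    hM.hasFDerivAt).fderiv)

theorem contDiff_matrix_mul {M : E → Matrix l m ℝ} {N : E → Matrix m k ℝ} (hM : ContDiff ℝ r M)
    (hN : ContDiff ℝ r N) : ContDiff ℝ r fun x => M x * N x := by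
  rw [contDiff_matrix_iff] at *
  exact fun i j => ContDiff.sum fun a _ => (hM i a).mul (hN a j)

theorem fderiv_matrix_mul {M : E → Matrix l m ℝ} {N : E → Matrix m k ℝ} {x : E}
    (hM : DifferentiableAt ℝ M x) (hN : DifferentiableAt ℝ N x) (v : E) :
    fderiv ℝ (fun y => M y * N y) x v = fderiv ℝ M x v * N x + M x * fderiv ℝ N x v := by
  have hbilinear : fderiv ℝ (fun y => M y * N y) x = _ :=
    (LinearMap.toContinuousBilinearMap
      (mulLinearMap ℝ : Matrix l m ℝ →ₗ[ℝ] Matrix m k ℝ →ₗ[ℝ] _)).fderiv_of_bilinear hM hN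
  rw [hbilinear, add_comm]
  rfl

theorem contDiff_matrix_transpose {M : E → Matrix m k ℝ} (hM : ContDiff ℝ r M) :
    ContDiff ℝ r fun x => (M x)ᵀ :=
  contDiff_matrix_iff.2 fun i j => contDiff_matrix_iff.1 hM j i

theorem fderiv_matrix_transpose (M : E → Matrix m k ℝ) (x v : E) :
    fderiv ℝ (fun y => (M y)ᵀ) x v = (fderiv ℝ M x v)ᵀ :=
  congrArg (· v) (Matrix.transposeLinearEquiv m k ℝ ℝ).toContinuousLinearEquiv.comp_fderiv

theorem fderiv_mulVec_self {M : (k → ℝ) → Matrix m k ℝ} {x : k → ℝ} (hM : DifferentiableAt ℝ M x)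
    (v : k → ℝ) : fderiv ℝ (fun y => M y *ᵥ y) x v = fderiv ℝ M x v *ᵥ x + M x *ᵥ v := by
  have hbilinear : fderiv ℝ (fun y => M y *ᵥ y) x = _ :=
    (LinearMap.toContinuousBilinearMap
      (Matrix.mulVecBilin ℝ ℝ : Matrix m k ℝ →ₗ[ℝ] (k → ℝ) →ₗ[ℝ] m → ℝ)).fderiv_of_bilinear hM
        differentiableAt_fun_id
  rw [hbilinear, fderiv_fun_id, add_comm]
  rfl

theorem fderiv_mulVec_add_mulVec_of_mulVec_self {M : (k → ℝ) → Matrix k k ℝ}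
    (hM : Differentiable ℝ M) (hx : ∀ x, M x *ᵥ x = x) (x v : k → ℝ) :
    fderiv ℝ M x v *ᵥ x + M x *ᵥ v = v := by
  rw [← fderiv_mulVec_self (hM x), funext hx, fderiv_fun_id, ContinuousLinearMap.id_apply]

theorem contDiff_matrix_inv [DecidableEq m] {M : E → Matrix m m ℝ} (hM : ContDiff ℝ r M)
    (hunit : ∀ x, IsUnit (M x)) : ContDiff ℝ r fun x => (M x)⁻¹ := by
  simp only [Matrix.nonsing_inv_eq_ringInverse]
  exact contDiff_iff_contDiffAt.2 fun x => by
    obtain ⟨u, hu⟩ := hunit x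
    exact ContDiffAt.comp x (hu ▸ contDiffAt_ringInverse ℝ u) hM.contDiffAt

end MatrixCalculus

section Forms

variable {ι F : Type*} [Fintype ι] [NormedAddCommGroup F] [NormedSpace ℝ F]

/-- The contraction `ι_x θ = x ^ μ θ_μ` of a one-form with the position vector field. -/
def contract (θ : (ι → ℝ) → ι → F) (x : ι → ℝ) : F := ∑ μ, x μ • θ x μ

theorem contDiff_contract {r : WithTop ℕ∞} {θ : (ι → ℝ) → ι → F} (hθ : ContDiff ℝ r θ) :
    ContDiff ℝ r (contract θ) := by
  unfold contract
  fun_prop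

theorem radialDeriv_apply {κ : Type*} [Fintype κ] {θ : (ι → ℝ) → κ → F} (hθ : Differentiable ℝ θ)
    (x : ι → ℝ) (ν : κ) : radialDeriv (fun y => θ y ν) x = radialDeriv θ x ν :=
  congrArg (· x) (fderiv_apply (hθ x) ν)

variable [DecidableEq ι]

/-- The partial derivative `∂_μ f` of a vector-valued function. -/
noncomputable def partialDeriv (μ : ι) (f : (ι → ℝ) → F) (x : ι → ℝ) : F :=
  fderiv ℝ f x (Pi.single μ 1)

theorem partialDeriv_add (μ : ι) {f g : (ι → ℝ) → F} {x : ι → ℝ} (hf : DifferentiableAt ℝ f x)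
    (hg : DifferentiableAt ℝ g x) :
    partialDeriv μ (fun y => f y + g y) x = partialDeriv μ f x + partialDeriv μ g x :=
  congrArg (· (Pi.single μ 1)) (fderiv_fun_add hf hg)

theorem partialDeriv_sub (μ : ι) {f g : (ι → ℝ) → F} {x : ι → ℝ} (hf : DifferentiableAt ℝ f x)
    (hg : DifferentiableAt ℝ g x) :
    partialDeriv μ (fun y => f y - g y) x = partialDeriv μ f x - partialDeriv μ g x :=
  congrArg (· (Pi.single μ 1)) (fderiv_fun_sub hf hg)

theorem contDiff_partialDeriv {f : (ι → ℝ) → F} (hf : ContDiff ℝ ∞ f) (μ : ι) :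
    ContDiff ℝ ∞ (partialDeriv μ f) :=
  (hf.fderiv_right (by simp)).clm_apply contDiff_const

theorem radialDeriv_eq_sum_partialDeriv (f : (ι → ℝ) → F) (x : ι → ℝ) :
    radialDeriv f x = ∑ μ, x μ • partialDeriv μ f x := by
  calc radialDeriv f x = fderiv ℝ f x (∑ μ, x μ • Pi.single μ 1) := by
        rw [← pi_eq_sum_univ' x, radialDeriv]
    _ = ∑ μ, x μ • partialDeriv μ f x := by simp only [map_sum, map_smul, partialDeriv]

theorem partialDeriv_comm {f : (ι → ℝ) → F} (hf : ContDiff ℝ ∞ f) (μ ν : ι) (x : ι → ℝ) :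
    partialDeriv μ (partialDeriv ν f) x = partialDeriv ν (partialDeriv μ f) x := by
  have hf' : DifferentiableAt ℝ (fderiv ℝ f) x :=
    (hf.fderiv_right (m := ∞) (by simp)).differentiable (by simp) x
  have hsecond (α β : ι) : partialDeriv α (partialDeriv β f) x =
      fderiv ℝ (fderiv ℝ f) x (Pi.single α 1) (Pi.single β 1) := by
    simpa using!
      congrArg (· (Pi.single α 1)) (fderiv_clm_apply hf' (differentiableAt_const _))
  rw [hsecond, hsecond]
  exact (hf.contDiffAt.isSymmSndFDerivAt (by simpa using ENat.LEInfty.out)) _ _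

theorem partialDeriv_contract {θ : (ι → ℝ) → ι → F} (hθ : Differentiable ℝ θ) (ν : ι)
    (x : ι → ℝ) :
    partialDeriv ν (contract θ) x = θ x ν + ∑ μ, x μ • partialDeriv ν (fun y => θ y μ) x := by
  have hterm (μ : ι) := (hasFDerivAt_apply (𝕜 := ℝ) μ x).fun_smul
    (differentiableAt_pi.1 (hθ x) μ).hasFDerivAt
  have hsum : HasFDerivAt (contract θ) _ x := HasFDerivAt.fun_sum fun μ _ => hterm μ
  simp [partialDeriv, hsum.fderiv, Finset.sum_add_distrib, Pi.single_apply, add_comm]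

end Forms

section RadialContraction

variable {ι F : Type*} [Fintype ι] [NormedAddCommGroup F] [NormedSpace ℝ F]

theorem radialDeriv_contract {θ : (ι → ℝ) → ι → F} (hθ : Differentiable ℝ θ) :
    radialDeriv (contract θ) = contract (radialDeriv θ + θ) := by
  classical
  funext x
  have hsecond : ∑ ν, x ν • ∑ μ, x μ • partialDeriv ν (fun y => θ y μ) x =
      ∑ μ, x μ • radialDeriv θ x μ := by
    simp only [← radialDeriv_apply hθ, radialDeriv_eq_sum_partialDeriv, Finset.smul_sum]
    rw [Finset.sum_comm]
    exact Finset.sum_congr rfl fun μ _ => Finset.sum_congr rfl fun ν _ => smul_comm _ _ _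
  rw [radialDeriv_eq_sum_partialDeriv]
  simp only [partialDeriv_contract hθ, smul_add, Finset.sum_add_distrib, hsecond, contract,
    Pi.add_apply]
  rw [add_comm]

end RadialContraction

section CovariantDerivative

variable {ι m k : Type*} [DecidableEq ι] [Fintype m] [Fintype k]
  {w : (ι → ℝ) → ι → Matrix m m ℝ} {w' : (ι → ℝ) → ι → Matrix k k ℝ}

/-- The covariant derivative `∂_μ A + w_μ A - A w'_μ` of a matrix-valued function, for connections
`w` and `w'` acting on the row and on the column index. -/
noncomputable def covDeriv (w : (ι → ℝ) → ι → Matrix m m ℝ) (w' : (ι → ℝ) → ι → Matrix k k ℝ)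
    (μ : ι) (A : (ι → ℝ) → Matrix m k ℝ) (x : ι → ℝ) : Matrix m k ℝ :=
  partialDeriv μ A x + w x μ * A x - A x * w' x μ

/-- The exterior covariant derivative `(dθ + w ∧ θ)_{μν}` of a matrix-valued one-form. Its value at
`θ = w` is the curvature of `w`. -/
noncomputable def extCovDeriv (w : (ι → ℝ) → ι → Matrix m m ℝ) (θ : (ι → ℝ) → ι → Matrix m k ℝ)
    (x : ι → ℝ) (μ ν : ι) : Matrix m k ℝ :=
  partialDeriv μ (fun y => θ y ν) x - partialDeriv ν (fun y => θ y μ) x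
    + w x μ * θ x ν - w x ν * θ x μ

/-- The exterior covariant derivative `(dB + w ∧ B - B ∧ w')_{μνρ}` of a matrix-valued two-form,
written as a cyclic sum. -/
noncomputable def extCovDerivTwo (w : (ι → ℝ) → ι → Matrix m m ℝ)
    (w' : (ι → ℝ) → ι → Matrix k k ℝ) (B : (ι → ℝ) → ι → ι → Matrix m k ℝ)
    (x : ι → ℝ) (μ ν ρ : ι) : Matrix m k ℝ :=
  covDeriv w w' μ (fun y => B y ν ρ) x + covDeriv w w' ν (fun y => B y ρ μ) x
    + covDeriv w w' ρ (fun y => B y μ ν) x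

theorem extCovDeriv_antisymm (w : (ι → ℝ) → ι → Matrix m m ℝ) (θ : (ι → ℝ) → ι → Matrix m k ℝ)
    (x : ι → ℝ) (μ ν : ι) : extCovDeriv w θ x μ ν = -extCovDeriv w θ x ν μ := by
  unfold extCovDeriv
  abel

variable [Fintype ι]

theorem covDeriv_sub {A B : (ι → ℝ) → Matrix m k ℝ} {x : ι → ℝ} (hA : DifferentiableAt ℝ A x)
    (hB : DifferentiableAt ℝ B x) (μ : ι) :
    covDeriv w w' μ (fun y => A y - B y) x = covDeriv w w' μ A x - covDeriv w w' μ B x := by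
  simp only [covDeriv, partialDeriv_sub μ hA hB, Matrix.mul_sub, Matrix.sub_mul]
  abel

theorem sum_smul_covDeriv (hw : contract w = 0) (hw' : contract w' = 0)
    (A : (ι → ℝ) → Matrix m k ℝ) (x : ι → ℝ) :
    ∑ μ, x μ • covDeriv w w' μ A x = radialDeriv A x := by
  have hleft : ∑ μ, x μ • (w x μ * A x) = contract w x * A x := by
    simp only [contract, Matrix.sum_mul, Matrix.smul_mul]
  have hright : ∑ μ, x μ • (A x * w' x μ) = A x * contract w' x := by
    simp only [contract, Matrix.mul_sum, Matrix.mul_smul]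
  simp only [covDeriv, smul_add, smul_sub, Finset.sum_add_distrib, Finset.sum_sub_distrib,
    hleft, hright, hw, hw', Pi.zero_apply, Matrix.zero_mul, Matrix.mul_zero, add_zero, sub_zero,
    radialDeriv_eq_sum_partialDeriv]

theorem sum_smul_covDeriv_of_contract_eq_zero {θ : (ι → ℝ) → ι → Matrix m k ℝ}
    (hθ : Differentiable ℝ θ) (hcontract : contract θ = 0) (ν : ι) (x : ι → ℝ) :
    ∑ μ, x μ • covDeriv w w' ν (fun y => θ y μ) x = -θ x ν := by
  have hpartial : ∑ μ, x μ • partialDeriv ν (fun y => θ y μ) x = -θ x ν := by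
    have h := partialDeriv_contract hθ ν x
    rw [hcontract, partialDeriv, fderiv_zero] at h
    exact eq_neg_of_add_eq_zero_right h.symm
  have hleft : ∑ μ, x μ • (w x ν * θ x μ) = w x ν * contract θ x := by
    simp only [contract, Matrix.mul_sum, Matrix.mul_smul]
  have hright : ∑ μ, x μ • (θ x μ * w' x ν) = contract θ x * w' x ν := by
    simp only [contract, Matrix.sum_mul, Matrix.smul_mul]
  simp only [covDeriv, smul_add, smul_sub, Finset.sum_add_distrib, Finset.sum_sub_distrib,
    hpartial, hleft, hright, hcontract, Pi.zero_apply, Matrix.zero_mul, Matrix.mul_zero, add_zero,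
    sub_zero]

/-- In a radial gauge, contracting `D B = 0` with `x` gives `x ^ μ ∂_μ B + 2 B = 0`. -/
theorem eq_zero_of_extCovDerivTwo_eq_zero (hw : contract w = 0) (hw' : contract w' = 0)
    {B : (ι → ℝ) → ι → ι → Matrix m k ℝ} (hB : Differentiable ℝ B)
    (hskew : ∀ x μ ν, B x μ ν = -B x ν μ) (hcontract : contract B = 0)
    (hclosed : extCovDerivTwo w w' B = 0) : B = 0 := by
  have hcolumn (ν : ι) : contract (fun y μ => B y μ ν) = 0 := by
    funext x
    simpa only [contract, Finset.sum_apply, Pi.smul_apply, Pi.zero_apply] using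
      congrFun (congrFun hcontract x) ν
  have hrow (ν : ι) : contract (fun y => B y ν) = 0 := by
    funext x
    have h := congrFun (hcolumn ν) x
    simp only [contract, hskew x _ ν, smul_neg, Finset.sum_neg_distrib, Pi.zero_apply,
      neg_eq_zero] at h
    exact h
  have hradial (ν ρ : ι) (x : ι → ℝ) :
      radialDeriv (fun y => B y ν ρ) x + ((1 : ℕ) + 1 : ℝ) • B x ν ρ = 0 := by
    calc radialDeriv (fun y => B y ν ρ) x + ((1 : ℕ) + 1 : ℝ) • B x ν ρ
        = radialDeriv (fun y => B y ν ρ) x + -B x ρ ν + -B x ρ ν := by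
          rw [hskew x ρ ν, neg_neg, Nat.cast_one, add_smul, one_smul, add_assoc]
      _ = ∑ μ, x μ • extCovDerivTwo w w' B x μ ν ρ := by
          simp only [extCovDerivTwo, smul_add, Finset.sum_add_distrib, sum_smul_covDeriv hw hw']
          rw [sum_smul_covDeriv_of_contract_eq_zero (by fun_prop) (hrow ρ),
            sum_smul_covDeriv_of_contract_eq_zero (θ := fun y μ => B y μ ν) (by fun_prop)
              (hcolumn ν)]
      _ = 0 := by simp only [hclosed, Pi.zero_apply, smul_zero, Finset.sum_const_zero]
  funext x ν ρ
  exact congrFun (eq_zero_of_radialDeriv_add_smul_eq_zero (by fun_prop) 1 (hradial ν ρ)) x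

theorem contDiff_extCovDeriv (hw : ContDiff ℝ ∞ w) {θ : (ι → ℝ) → ι → Matrix m k ℝ}
    (hθ : ContDiff ℝ ∞ θ) : ContDiff ℝ ∞ (extCovDeriv w θ) := by
  have hpartial (μ ν : ι) : ContDiff ℝ ∞ (partialDeriv μ fun y => θ y ν) :=
    contDiff_partialDeriv (contDiff_pi.1 hθ ν) μ
  have hmul (μ ν : ι) : ContDiff ℝ ∞ fun x => w x μ * θ x ν :=
    contDiff_matrix_mul (contDiff_pi.1 hw μ) (contDiff_pi.1 hθ ν)
  exact contDiff_pi.2 fun μ => contDiff_pi.2 fun ν =>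
    (((hpartial μ ν).sub (hpartial ν μ)).add (hmul μ ν)).sub (hmul ν μ)

theorem contract_extCovDeriv {θ : (ι → ℝ) → ι → Matrix m k ℝ} (hθ : Differentiable ℝ θ)
    (x : ι → ℝ) (ν : ι) :
    contract (extCovDeriv w θ) x ν = radialDeriv θ x ν + θ x ν + contract w x * θ x ν
      - (partialDeriv ν (contract θ) x + w x ν * contract θ x) := by
  simp only [contract, Finset.sum_apply, Pi.smul_apply, extCovDeriv, smul_add, smul_sub,
    Finset.sum_add_distrib, Finset.sum_sub_distrib, Matrix.sum_mul, Matrix.smul_mul,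
    Matrix.mul_sum, Matrix.mul_smul, ← radialDeriv_eq_sum_partialDeriv]
  rw [radialDeriv_apply hθ, partialDeriv_contract hθ ν x]
  abel

theorem partialDeriv_matrix_mul {l : Type*} [Fintype l] (μ : ι) {M : (ι → ℝ) → Matrix l m ℝ}
    {N : (ι → ℝ) → Matrix m k ℝ} {x : ι → ℝ} (hM : DifferentiableAt ℝ M x)
    (hN : DifferentiableAt ℝ N x) :
    partialDeriv μ (fun y => M y * N y) x = partialDeriv μ M x * N x + M x * partialDeriv μ N x :=
  fderiv_matrix_mul hM hN _

theorem partialDeriv_extCovDeriv (hw : ContDiff ℝ ∞ w) {θ : (ι → ℝ) → ι → Matrix m k ℝ}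
    (hθ : ContDiff ℝ ∞ θ) (x : ι → ℝ) (ρ μ ν : ι) :
    partialDeriv ρ (fun y => extCovDeriv w θ y μ ν) x =
      partialDeriv ρ (partialDeriv μ fun y => θ y ν) x
      - partialDeriv ρ (partialDeriv ν fun y => θ y μ) x
      + (partialDeriv ρ (fun y => w y μ) x * θ x ν + w x μ * partialDeriv ρ (fun y => θ y ν) x)
      - (partialDeriv ρ (fun y => w y ν) x * θ x μ
        + w x ν * partialDeriv ρ (fun y => θ y μ) x) := by
  have hw' (μ : ι) : DifferentiableAt ℝ (fun y => w y μ) x :=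
    (contDiff_pi.1 hw μ).differentiable (by simp) x
  have hθ' (μ : ι) : DifferentiableAt ℝ (fun y => θ y μ) x :=
    (contDiff_pi.1 hθ μ).differentiable (by simp) x
  have hpartial (μ ν : ι) : DifferentiableAt ℝ (partialDeriv μ fun y => θ y ν) x :=
    (contDiff_partialDeriv (contDiff_pi.1 hθ ν) μ).differentiable (by simp) x
  have hmul (μ ν : ι) : DifferentiableAt ℝ (fun y => w y μ * θ y ν) x :=
    (contDiff_matrix_mul (contDiff_pi.1 hw μ) (contDiff_pi.1 hθ ν)).differentiable (by simp) x
  simp only [extCovDeriv]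
  rw [partialDeriv_sub ρ (((hpartial μ ν).fun_sub (hpartial ν μ)).fun_add (hmul μ ν)) (hmul ν μ),
    partialDeriv_add ρ ((hpartial μ ν).fun_sub (hpartial ν μ)) (hmul μ ν),
    partialDeriv_sub ρ (hpartial μ ν) (hpartial ν μ),
    partialDeriv_matrix_mul ρ (hw' μ) (hθ' ν), partialDeriv_matrix_mul ρ (hw' ν) (hθ' μ)]

theorem extCovDerivTwo_extCovDeriv (hw : ContDiff ℝ ∞ w) {θ : (ι → ℝ) → ι → Matrix m k ℝ}
    (hθ : ContDiff ℝ ∞ θ) (x : ι → ℝ) (μ ν ρ : ι) :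
    extCovDerivTwo w 0 (extCovDeriv w θ) x μ ν ρ =
      extCovDeriv w w x μ ν * θ x ρ + extCovDeriv w w x ν ρ * θ x μ
        + extCovDeriv w w x ρ μ * θ x ν := by
  simp only [extCovDerivTwo, covDeriv, partialDeriv_extCovDeriv hw hθ]
  rw [partialDeriv_comm (contDiff_pi.1 hθ ρ) μ ν, partialDeriv_comm (contDiff_pi.1 hθ μ) ν ρ,
    partialDeriv_comm (contDiff_pi.1 hθ ν) ρ μ]
  simp only [extCovDeriv, Matrix.add_mul, Matrix.sub_mul, Matrix.mul_add, Matrix.mul_sub,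
    Matrix.mul_assoc, Pi.zero_apply, Matrix.mul_zero]
  abel

theorem extCovDerivTwo_curvature (hw : ContDiff ℝ ∞ w) :
    extCovDerivTwo w w (extCovDeriv w w) = 0 := by
  funext x μ ν ρ
  have h := extCovDerivTwo_extCovDeriv hw hw x μ ν ρ
  simp only [extCovDerivTwo, covDeriv, Pi.zero_apply, Matrix.mul_zero, sub_zero] at h ⊢
  rw [← sub_eq_zero] at h
  rw [← h]
  abel

theorem extCovDerivTwo_sub {A B : (ι → ℝ) → ι → ι → Matrix m k ℝ} (hA : Differentiable ℝ A)
    (hB : Differentiable ℝ B) :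
    extCovDerivTwo w w' (A - B) = extCovDerivTwo w w' A - extCovDerivTwo w w' B := by
  funext x μ ν ρ
  have hsub (α β γ : ι) : covDeriv w w' α (fun y => (A - B) y β γ) x =
      covDeriv w w' α (fun y => A y β γ) x - covDeriv w w' α (fun y => B y β γ) x :=
    covDeriv_sub (by fun_prop) (by fun_prop) α
  rw [extCovDerivTwo, hsub, hsub, hsub]
  simp only [Pi.sub_apply, extCovDerivTwo]
  abel

end CovariantDerivative

section Frames

variable {ι : Type*}

/-- The coframe one-forms `θ ^ a = e ^ a_μ dx ^ μ`, collected into one column-valued one-form. -/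
def coframe (e : (ι → ℝ) → Matrix ι ι ℝ) (x : ι → ℝ) (μ : ι) : Matrix ι Unit ℝ :=
  Matrix.replicateCol Unit ((e x).col μ)

variable [Fintype ι]

/-- The matrix `θ ^ a_{bμ} x ^ b` of a matrix-valued one-form acting on the position vector.
For a connection `w`, `1 + applyPosition w` is the covariant derivative of the position field. -/
def applyPosition (θ : (ι → ℝ) → ι → Matrix ι ι ℝ) (x : ι → ℝ) : Matrix ι ι ℝ :=
  Matrix.of fun a μ => (θ x μ *ᵥ x) a

variable {w : (ι → ℝ) → ι → Matrix ι ι ℝ} {e : (ι → ℝ) → Matrix ι ι ℝ}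

theorem contDiff_coframe {r : WithTop ℕ∞} (he : ContDiff ℝ r e) : ContDiff ℝ r (coframe e) :=
  contDiff_pi.2 fun μ => contDiff_matrix_iff.2 fun a _ => contDiff_matrix_iff.1 he a μ

theorem differentiable_coframe (he : Differentiable ℝ e) : Differentiable ℝ (coframe e) :=
  differentiable_pi.2 fun μ => differentiable_matrix_iff.2 fun a _ =>
    differentiable_matrix_iff.1 he a μ

theorem fderiv_coframe (he : Differentiable ℝ e) (x v : ι → ℝ) (μ : ι) :
    fderiv ℝ (fun y => coframe e y μ) x v = coframe (fun y => fderiv ℝ e y v) x μ := by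
  ext a u
  rw [← fderiv_matrix_apply (differentiable_pi.1 (differentiable_coframe he) μ x)]
  exact fderiv_matrix_apply (he x) v a μ

theorem radialDeriv_coframe (he : Differentiable ℝ e) :
    radialDeriv (coframe e) = coframe (radialDeriv e) := by
  funext x μ
  rw [← radialDeriv_apply (differentiable_coframe he)]
  exact fderiv_coframe he x x μ

theorem contract_coframe (e : (ι → ℝ) → Matrix ι ι ℝ) (x : ι → ℝ) :
    contract (coframe e) x = Matrix.replicateCol Unit (e x *ᵥ x) := by
  ext a u
  simp [contract, coframe, Matrix.sum_apply, Matrix.mulVec, dotProduct, mul_comm]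

theorem differentiable_replicateCol :
    Differentiable ℝ (Matrix.replicateCol Unit : (ι → ℝ) → Matrix ι Unit ℝ) :=
  differentiable_matrix_iff.2 fun a _ => differentiable_apply a

theorem fderiv_replicateCol (x v : ι → ℝ) :
    fderiv ℝ (Matrix.replicateCol Unit : (ι → ℝ) → Matrix ι Unit ℝ) x v =
      Matrix.replicateCol Unit v := by
  ext a u
  rw [← fderiv_matrix_apply (differentiable_replicateCol x)]
  exact congrArg (· v) (hasFDerivAt_apply (𝕜 := ℝ) a x).fderiv

variable [DecidableEq ι]

/-- The torsion `dθ + w ∧ θ` of a connection `w` with respect to a vielbein `e`. -/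
noncomputable def torsion (w : (ι → ℝ) → ι → Matrix ι ι ℝ) (e : (ι → ℝ) → Matrix ι ι ℝ) :
    (ι → ℝ) → ι → ι → Matrix ι Unit ℝ :=
  extCovDeriv w (coframe e)

theorem torsion_apply (he : Differentiable ℝ e) (x : ι → ℝ) (μ ν a : ι) (u : Unit) :
    torsion w e x μ ν a u = (partialDeriv μ e x + w x μ * e x) a ν
      - (partialDeriv ν e x + w x ν * e x) a μ := by
  have hpartial (α β : ι) : partialDeriv α (fun y => coframe e y β) x a u =
      partialDeriv α e x a β :=
    congrFun (congrFun (fderiv_coframe he x (Pi.single α 1) β) a) u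
  have hmul (α β : ι) : (w x α * coframe e x β) a u = (w x α * e x) a β := rfl
  simp only [torsion, extCovDeriv, Matrix.sub_apply, Matrix.add_apply, hpartial, hmul]
  ring

theorem contract_torsion (he : Differentiable ℝ e) (hx : ∀ x, e x *ᵥ x = x) :
    contract (torsion w e) = coframe (radialDeriv e + e + contract w * e
      - (1 + applyPosition w)) := by
  have hposition : contract (coframe e) = Matrix.replicateCol Unit := by
    funext x
    rw [contract_coframe, hx]
  funext x ν
  have hpartial : partialDeriv ν (Matrix.replicateCol Unit) x = coframe 1 x ν := by
    rw [coframe, Pi.one_apply, ← Matrix.mulVec_single_one, Matrix.one_mulVec]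
    exact fderiv_replicateCol x (Pi.single ν 1)
  rw [torsion, contract_extCovDeriv (differentiable_coframe he), hposition,
    radialDeriv_coframe he, hpartial]
  rfl

theorem isSymm_transpose_mul_one_add_applyPosition (he : Differentiable ℝ e)
    (hx : ∀ x, x ᵥ* e x = x) (hskew : ∀ x μ, (w x μ)ᵀ = -w x μ) (htorsion : torsion w e = 0)
    (x : ι → ℝ) : ((e x)ᵀ * (1 + applyPosition w x)).IsSymm := by
  have hpartial (μ ν : ι) :
      (x ᵥ* partialDeriv μ e x) ν + e x μ ν = (Pi.single μ 1 : ι → ℝ) ν := by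
    have h := congrFun (fderiv_mulVec_add_mulVec_of_mulVec_self (M := fun y => (e y)ᵀ)
      (differentiable_matrix_iff.2 fun a b => differentiable_matrix_iff.1 he b a)
      (fun y => by rw [Matrix.mulVec_transpose, hx]) x (Pi.single μ 1)) ν
    rwa [fderiv_matrix_transpose, Matrix.mulVec_transpose, Matrix.mulVec_single_one] at h
  have hconn (μ ν : ι) : (x ᵥ* (w x μ * e x)) ν = -((e x)ᵀ * applyPosition w x) ν μ := by
    calc (x ᵥ* (w x μ * e x)) ν = (((w x μ)ᵀ *ᵥ x) ᵥ* e x) ν := by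
          rw [Matrix.mulVec_transpose, Matrix.vecMul_vecMul]
      _ = -((e x)ᵀ *ᵥ (w x μ *ᵥ x)) ν := by
          rw [hskew, Matrix.neg_mulVec, Matrix.neg_vecMul, Matrix.mulVec_transpose, Pi.neg_apply]
  have htorsion' (μ ν : ι) : (x ᵥ* (partialDeriv μ e x + w x μ * e x)) ν =
      (x ᵥ* (partialDeriv ν e x + w x ν * e x)) μ := by
    simp only [Matrix.vecMul, dotProduct]
    refine Finset.sum_congr rfl fun a _ => congrArg (x a * ·) (sub_eq_zero.1 ?_)
    rw [← torsion_apply he x μ ν a (), htorsion]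
    rfl
  ext μ ν
  have h := htorsion' μ ν
  simp only [Matrix.vecMul_add, Pi.add_apply, hconn] at h
  rw [Matrix.mul_add, Matrix.mul_one]
  simp only [Matrix.transpose_apply, Matrix.add_apply]
  linarith [hpartial μ ν, hpartial ν μ, Pi.single_comm μ (1 : ℝ) ν]

end Frames

section LeviCivita

variable {ι : Type*} {C W : ι → Matrix ι ι ℝ}

/-- The solution `W` of `C_a + W_a - W_aᵀ = 0` that is skew in its first and last index, where
`W a c b` is the component `W ^ a_{cb}`: Koszul's formula for the Levi-Civita connection in an
orthonormal frame with anholonomy coefficients `C`. -/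
noncomputable def koszul (C : ι → Matrix ι ι ℝ) (a : ι) : Matrix ι ι ℝ :=
  Matrix.of fun c b => (C a b c + C b c a - C c a b) / 2

theorem eq_koszul_iff (hC : ∀ a, (C a)ᵀ = -C a) :
    W = koszul C ↔ (∀ a b c, W a c b = -W b c a) ∧ ∀ a, C a + W a - (W a)ᵀ = 0 := by
  have hC' (a b c : ι) : C a c b = -C a b c := congrFun (congrFun (hC a) b) c
  constructor
  · rintro rfl
    refine ⟨fun a b c => ?_, fun a => ?_⟩
    · simp only [koszul, Matrix.of_apply]
      linarith [hC' a b c, hC' b c a, hC' c a b]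
    · ext b c
      simp only [koszul, Matrix.sub_apply, Matrix.add_apply, Matrix.transpose_apply,
        Matrix.of_apply, Matrix.zero_apply]
      linarith [hC' a b c, hC' b c a, hC' c a b]
  · rintro ⟨hskew, htorsion⟩
    have htorsion' (a b c : ι) : C a b c + W a b c - W a c b = 0 :=
      congrFun (congrFun (htorsion a) b) c
    funext a
    ext c b
    simp only [koszul, Matrix.of_apply]
    linarith [htorsion' a b c, htorsion' b c a, htorsion' c a b, hskew a b c, hskew b c a,
      hskew c a b]

variable [Fintype ι] [DecidableEq ι] {w : (ι → ℝ) → ι → Matrix ι ι ℝ}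
  {e : (ι → ℝ) → Matrix ι ι ℝ}

/-- The coordinate components `∂_μ e ^ a_ν - ∂_ν e ^ a_μ` of the exterior derivative of the `a`-th
coframe form. -/
noncomputable def coframeDeriv (e : (ι → ℝ) → Matrix ι ι ℝ) (x : ι → ℝ) (a : ι) : Matrix ι ι ℝ :=
  Matrix.of fun μ ν => partialDeriv μ e x a ν - partialDeriv ν e x a μ

/-- The anholonomy coefficients of a vielbein: the components of the exterior derivative of the
coframe with respect to the coframe itself. -/
noncomputable def anholonomy (e : (ι → ℝ) → Matrix ι ι ℝ) (x : ι → ℝ) (a : ι) : Matrix ι ι ℝ :=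
  ((e x)⁻¹)ᵀ * coframeDeriv e x a * (e x)⁻¹

/-- The components `w ^ a_{bc}` of a connection with respect to the coframe of a vielbein `e`,
stored as `frameCoeff w e x a c b`. -/
noncomputable def frameCoeff (w : (ι → ℝ) → ι → Matrix ι ι ℝ) (e : (ι → ℝ) → Matrix ι ι ℝ)
    (x : ι → ℝ) (a : ι) : Matrix ι ι ℝ :=
  ((e x)⁻¹)ᵀ * Matrix.of fun μ b => w x μ a b

/-- The spin connection of the vielbein `e`: the unique metric-compatible torsion-free one. -/
noncomputable def leviCivita (e : (ι → ℝ) → Matrix ι ι ℝ) (x : ι → ℝ) (μ : ι) : Matrix ι ι ℝ :=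
  Matrix.of fun a b => ((e x)ᵀ * koszul (anholonomy e x) a) μ b

theorem transpose_anholonomy (e : (ι → ℝ) → Matrix ι ι ℝ) (x : ι → ℝ) (a : ι) :
    (anholonomy e x a)ᵀ = -anholonomy e x a := by
  have h : (coframeDeriv e x a)ᵀ = -coframeDeriv e x a := by
    ext μ ν
    exact (neg_sub _ _).symm
  simp only [anholonomy, Matrix.transpose_mul, Matrix.transpose_transpose, h, Matrix.neg_mul,
    Matrix.mul_neg, Matrix.mul_assoc]

theorem transpose_mul_frameCoeff {x : ι → ℝ} (hunit : IsUnit (e x)) (a : ι) :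
    (e x)ᵀ * frameCoeff w e x a = Matrix.of fun μ b => w x μ a b := by
  rw [frameCoeff, ← Matrix.mul_assoc, ← Matrix.transpose_mul,
    Matrix.nonsing_inv_mul _ ((Matrix.isUnit_iff_isUnit_det _).1 hunit), Matrix.transpose_one,
    Matrix.one_mul]

theorem eq_leviCivita_iff (hunit : ∀ x, IsUnit (e x)) :
    w = leviCivita e ↔ ∀ x, frameCoeff w e x = koszul (anholonomy e x) := by
  constructor
  · rintro rfl x
    funext a
    refine ((Matrix.isUnit_transpose (e x)).2 (hunit x)).mul_left_cancel ?_
    rw [transpose_mul_frameCoeff (hunit x)]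
    rfl
  · intro h
    funext x μ
    ext a b
    rw [leviCivita, Matrix.of_apply, ← h, transpose_mul_frameCoeff (hunit x)]
    rfl

theorem skew_iff_frameCoeff_skew (hunit : ∀ x, IsUnit (e x)) :
    (∀ x μ, (w x μ)ᵀ = -w x μ) ↔
      ∀ x a b c, frameCoeff w e x a c b = -frameCoeff w e x b c a := by
  have hmulVec (x : ι → ℝ) (a b : ι) :
      (fun c => frameCoeff w e x a c b) = ((e x)⁻¹)ᵀ *ᵥ fun μ => w x μ a b := rfl
  have hinjective (x : ι → ℝ) : Function.Injective (((e x)⁻¹)ᵀ).mulVec :=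
    Matrix.mulVec_injective_of_isUnit
      ((Matrix.isUnit_transpose _).2 (Matrix.isUnit_nonsing_inv_iff.2 (hunit x)))
  refine forall_congr' fun x => ?_
  calc (∀ μ, (w x μ)ᵀ = -w x μ)
      ↔ ∀ a b, (fun μ => w x μ a b) = -fun μ => w x μ b a := by
        simp only [← Matrix.ext_iff, funext_iff, Matrix.transpose_apply, Matrix.neg_apply,
          Pi.neg_apply]
        exact ⟨fun h a b μ => h μ b a, fun h μ a b => h b a μ⟩
    _ ↔ ∀ a b, (fun c => frameCoeff w e x a c b) = -fun c => frameCoeff w e x b c a := by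
        simp only [hmulVec, ← Matrix.mulVec_neg, (hinjective x).eq_iff]
    _ ↔ ∀ a b c, frameCoeff w e x a c b = -frameCoeff w e x b c a := by
        simp only [funext_iff, Pi.neg_apply]

theorem torsion_eq_zero_iff (he : Differentiable ℝ e) (hunit : ∀ x, IsUnit (e x)) :
    torsion w e = 0 ↔
      ∀ x a, anholonomy e x a + frameCoeff w e x a - (frameCoeff w e x a)ᵀ = 0 := by
  have hframe (x : ι → ℝ) (a : ι) : (Matrix.of fun μ ν => torsion w e x μ ν a ()) =
      (e x)ᵀ * (anholonomy e x a + frameCoeff w e x a - (frameCoeff w e x a)ᵀ) * e x := by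
    have hinv := Matrix.nonsing_inv_mul _ ((Matrix.isUnit_iff_isUnit_det _).1 (hunit x))
    have hanholonomy : (e x)ᵀ * anholonomy e x a * e x = coframeDeriv e x a := by
      rw [anholonomy, Matrix.mul_assoc, Matrix.mul_assoc _ _ (e x), hinv, Matrix.mul_one,
        ← Matrix.mul_assoc, ← Matrix.transpose_mul, hinv, Matrix.transpose_one, Matrix.one_mul]
    have htranspose : (e x)ᵀ * (frameCoeff w e x a)ᵀ * e x =
        ((e x)ᵀ * frameCoeff w e x a * e x)ᵀ := by
      simp only [Matrix.transpose_mul, Matrix.transpose_transpose, Matrix.mul_assoc]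
    rw [Matrix.mul_sub, Matrix.mul_add, Matrix.sub_mul, Matrix.add_mul, hanholonomy, htranspose,
      transpose_mul_frameCoeff (hunit x)]
    ext μ ν
    rw [Matrix.of_apply, torsion_apply he]
    simp only [coframeDeriv, Matrix.add_apply, Matrix.sub_apply, Matrix.transpose_apply,
      Matrix.of_apply, Matrix.mul_apply]
    ring
  calc torsion w e = 0
      ↔ ∀ x a, (Matrix.of fun μ ν => torsion w e x μ ν a ()) = 0 :=
        ⟨fun h x a => by rw [h]; rfl, fun h => by
          funext x μ ν
          ext a
          exact congrFun (congrFun (h x a) μ) ν⟩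
    _ ↔ ∀ x a, anholonomy e x a + frameCoeff w e x a - (frameCoeff w e x a)ᵀ = 0 :=
        forall₂_congr fun x a => by rw [hframe, transpose_mul_mul_eq_zero_iff (hunit x)]

theorem eq_leviCivita_iff_skew_and_torsion_eq_zero (he : Differentiable ℝ e)
    (hunit : ∀ x, IsUnit (e x)) :
    w = leviCivita e ↔ (∀ x μ, (w x μ)ᵀ = -w x μ) ∧ torsion w e = 0 := by
  rw [eq_leviCivita_iff hunit, skew_iff_frameCoeff_skew hunit, torsion_eq_zero_iff he hunit,
    ← forall_and]
  exact forall_congr' fun x => eq_koszul_iff (transpose_anholonomy e x)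

theorem contDiff_anholonomy (he : ContDiff ℝ ∞ e) (hunit : ∀ x, IsUnit (e x)) :
    ContDiff ℝ ∞ (anholonomy e) := by
  have hinv := contDiff_matrix_inv he hunit
  have hpartial (μ a ν : ι) : ContDiff ℝ ∞ fun x => partialDeriv μ e x a ν :=
    contDiff_matrix_iff.1 (contDiff_partialDeriv he μ) a ν
  have hcoframe (a : ι) : ContDiff ℝ ∞ fun x => coframeDeriv e x a :=
    contDiff_matrix_iff.2 fun μ ν => (hpartial μ a ν).sub (hpartial ν a μ)
  exact contDiff_pi.2 fun a =>
    contDiff_matrix_mul (contDiff_matrix_mul (contDiff_matrix_transpose hinv) (hcoframe a)) hinv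

theorem contDiff_leviCivita (he : ContDiff ℝ ∞ e) (hunit : ∀ x, IsUnit (e x)) :
    ContDiff ℝ ∞ (leviCivita e) := by
  have hanholonomy (a b c : ι) : ContDiff ℝ ∞ fun x => anholonomy e x a b c :=
    contDiff_matrix_iff.1 (contDiff_pi.1 (contDiff_anholonomy he hunit) a) b c
  have hkoszul (a : ι) : ContDiff ℝ ∞ fun x => koszul (anholonomy e x) a :=
    contDiff_matrix_iff.2 fun c b =>
      (((hanholonomy a b c).add (hanholonomy b c a)).sub (hanholonomy c a b)).div_const 2
  exact contDiff_pi.2 fun μ => contDiff_matrix_iff.2 fun a b =>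
    contDiff_matrix_iff.1 (contDiff_matrix_mul (contDiff_matrix_transpose he) (hkoszul a)) μ b

end LeviCivita

section NormalVielbein

variable {ι : Type*} [Fintype ι] {w : (ι → ℝ) → ι → Matrix ι ι ℝ} {e : (ι → ℝ) → Matrix ι ι ℝ}

theorem radialDeriv_transpose (e : (ι → ℝ) → Matrix ι ι ℝ) (x : ι → ℝ) :
    radialDeriv (fun y => (e y)ᵀ) x = (radialDeriv e x)ᵀ :=
  fderiv_matrix_transpose e x x

theorem mulVec_self_of_radialDeriv_add (he : ContDiff ℝ 1 e)
    (h : ∀ x, (radialDeriv e x + e x) *ᵥ x = x) (x : ι → ℝ) : e x *ᵥ x = x := by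
  have hsmooth : ContDiff ℝ 1 fun y => e y *ᵥ y :=
    contDiff_pi.2 fun a => ContDiff.sum fun b _ =>
      (contDiff_matrix_iff.1 he a b).mul (contDiff_apply ℝ ℝ b)
  have hradial (y : ι → ℝ) : radialDeriv ((fun y => e y *ᵥ y) - id) y = 0 := by
    have hmulVec : radialDeriv (fun y => e y *ᵥ y) y = y := by
      calc radialDeriv (fun y => e y *ᵥ y) y = radialDeriv e y *ᵥ y + e y *ᵥ y :=
            fderiv_mulVec_self (he.differentiable one_ne_zero y) y
        _ = y := by rw [← Matrix.add_mulVec, h]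
    rw [radialDeriv_sub (hsmooth.differentiable one_ne_zero y) differentiableAt_id, hmulVec,
      radialDeriv, fderiv_id, ContinuousLinearMap.id_apply, sub_self]
  simpa [sub_eq_zero] using
    eq_apply_zero_of_radialDeriv_eq_zero (hsmooth.sub contDiff_id) hradial x

theorem applyPosition_mulVec_self (θ : (ι → ℝ) → ι → Matrix ι ι ℝ) (x : ι → ℝ) :
    applyPosition θ x *ᵥ x = contract θ x *ᵥ x := by
  have hsum : contract θ x *ᵥ x = ∑ μ, x μ • (θ x μ *ᵥ x) := by
    simp only [contract, Matrix.sum_mulVec, Matrix.smul_mulVec]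
  funext a
  rw [hsum]
  simp only [Matrix.mulVec, dotProduct, applyPosition, Matrix.of_apply, Finset.sum_apply,
    Pi.smul_apply, smul_eq_mul, mul_comm]

theorem vecMul_applyPosition_self {x : ι → ℝ} (hskew : ∀ μ, (w x μ)ᵀ = -w x μ) :
    x ᵥ* applyPosition w x = 0 := by
  funext μ
  have hneg : x ⬝ᵥ w x μ *ᵥ x = -(x ⬝ᵥ w x μ *ᵥ x) := by
    rw [← dotProduct_neg, ← Matrix.neg_mulVec, ← hskew μ, Matrix.mulVec_transpose,
      Matrix.dotProduct_mulVec, dotProduct_comm]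
  exact self_eq_neg.1 hneg

variable [DecidableEq ι]

/-- Smooth vielbeins satisfying the conditions (one), (two) and (three) of normal coordinates. The
last one is stated in the equivalent form without inverses. -/
structure IsNormalVielbein (e : (ι → ℝ) → Matrix ι ι ℝ) : Prop where
  contDiff : ContDiff ℝ ∞ e
  isUnit : ∀ x, IsUnit (e x)
  mulVec_self : ∀ x, e x *ᵥ x = x
  vecMul_self : ∀ x, x ᵥ* e x = x
  isSymm : ∀ x, ((e x)ᵀ * (radialDeriv e x + e x)).IsSymm

/-- A smooth metric-compatible torsion-free connection and its vielbein, both in radial gauge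
`x ^ μ w_μ = 0`, `x ^ μ e ^ a_μ = x ^ a`. -/
structure IsRadialCartanPair (w : (ι → ℝ) → ι → Matrix ι ι ℝ) (e : (ι → ℝ) → Matrix ι ι ℝ) :
    Prop where
  contDiff_connection : ContDiff ℝ ∞ w
  contDiff_vielbein : ContDiff ℝ ∞ e
  isUnit : ∀ x, IsUnit (e x)
  skew : ∀ x μ, (w x μ)ᵀ = -w x μ
  torsion_eq_zero : torsion w e = 0
  contract_eq_zero : contract w = 0
  mulVec_self : ∀ x, e x *ᵥ x = x

theorem radialDeriv_add_self_of_torsion_eq_zero (he : Differentiable ℝ e)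
    (hx : ∀ x, e x *ᵥ x = x) (htorsion : torsion w e = 0) :
    radialDeriv e + e + contract w * e = 1 + applyPosition w := by
  have h := contract_torsion (w := w) he hx
  funext x
  ext a μ
  have hentry := congrFun (congrFun (congrFun (congrFun h x) μ) a) ()
  rw [htorsion] at hentry
  simp only [contract, Pi.zero_apply, smul_zero, Finset.sum_const_zero] at hentry
  exact sub_eq_zero.1 hentry.symm

namespace IsRadialCartanPair

theorem radialDeriv_add_self (h : IsRadialCartanPair w e) :
    radialDeriv e + e = 1 + applyPosition w := by
  simpa only [h.contract_eq_zero, zero_mul, add_zero] using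
    radialDeriv_add_self_of_torsion_eq_zero (h.contDiff_vielbein.differentiable (by simp))
      h.mulVec_self h.torsion_eq_zero

theorem vecMul_self (h : IsRadialCartanPair w e) (x : ι → ℝ) : x ᵥ* e x = x := by
  rw [← Matrix.mulVec_transpose]
  refine mulVec_self_of_radialDeriv_add (e := fun y => (e y)ᵀ)
    (contDiff_matrix_transpose (h.contDiff_vielbein.of_le (by simp))) (fun y => ?_) x
  rw [radialDeriv_transpose, ← Matrix.transpose_add, Matrix.mulVec_transpose, ← Pi.add_apply,
    h.radialDeriv_add_self, Pi.add_apply, Matrix.vecMul_add, vecMul_applyPosition_self (h.skew y),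
    add_zero]
  exact Matrix.vecMul_one y

theorem isNormalVielbein (h : IsRadialCartanPair w e) : IsNormalVielbein e where
  contDiff := h.contDiff_vielbein
  isUnit := h.isUnit
  mulVec_self := h.mulVec_self
  vecMul_self := h.vecMul_self
  isSymm x := by
    rw [← Pi.add_apply, h.radialDeriv_add_self]
    exact isSymm_transpose_mul_one_add_applyPosition (h.contDiff_vielbein.differentiable (by simp))
      h.vecMul_self h.skew h.torsion_eq_zero x

end IsRadialCartanPair

/-- Condition (three) makes `eᵀ (x ^ μ w_μ) e` symmetric, and it is skew because `w` is. -/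
theorem IsNormalVielbein.contract_leviCivita (h : IsNormalVielbein e) :
    contract (leviCivita e) = 0 := by
  have he : Differentiable ℝ e := h.contDiff.differentiable (by simp)
  obtain ⟨hskew, htorsion⟩ :=
    (eq_leviCivita_iff_skew_and_torsion_eq_zero he h.isUnit).1 rfl
  set w := leviCivita e
  funext x
  rw [Pi.zero_apply, ← transpose_mul_mul_eq_zero_iff (h.isUnit x)]
  have hcontract : (contract w x)ᵀ = -contract w x := by
    simp only [contract, Matrix.transpose_sum, Matrix.transpose_smul, hskew, smul_neg,
      Finset.sum_neg_distrib]
  have hskew' : ((e x)ᵀ * contract w x * e x)ᵀ = -((e x)ᵀ * contract w x * e x) := by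
    simp only [Matrix.transpose_mul, Matrix.transpose_transpose, hcontract, Matrix.mul_neg,
      Matrix.neg_mul, Matrix.mul_assoc]
  have hsymm : ((e x)ᵀ * contract w x * e x).IsSymm := by
    have heuler : radialDeriv e x + e x + contract w x * e x = 1 + applyPosition w x :=
      congrFun (radialDeriv_add_self_of_torsion_eq_zero he h.mulVec_self htorsion) x
    rw [Matrix.mul_assoc, ← add_sub_cancel_left (radialDeriv e x + e x) (contract w x * e x),
      heuler, Matrix.mul_sub]
    exact (isSymm_transpose_mul_one_add_applyPosition he h.vecMul_self hskew htorsion x).sub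
      (h.isSymm x)
  ext a b
  exact self_eq_neg.1 (congrFun (congrFun (hsymm.symm.trans hskew') a) b)

theorem IsNormalVielbein.isRadialCartanPair_leviCivita (h : IsNormalVielbein e) :
    IsRadialCartanPair (leviCivita e) e where
  contDiff_connection := contDiff_leviCivita h.contDiff h.isUnit
  contDiff_vielbein := h.contDiff
  isUnit := h.isUnit
  skew := ((eq_leviCivita_iff_skew_and_torsion_eq_zero
    (h.contDiff.differentiable (by simp)) h.isUnit).1 rfl).1
  torsion_eq_zero := ((eq_leviCivita_iff_skew_and_torsion_eq_zero
    (h.contDiff.differentiable (by simp)) h.isUnit).1 rfl).2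
  contract_eq_zero := h.contract_leviCivita
  mulVec_self := h.mulVec_self

theorem IsRadialCartanPair.eq_leviCivita (h : IsRadialCartanPair w e) : w = leviCivita e :=
  (eq_leviCivita_iff_skew_and_torsion_eq_zero (h.contDiff_vielbein.differentiable (by simp))
    h.isUnit).2 ⟨h.skew, h.torsion_eq_zero⟩

end NormalVielbein

section RadialFormulas

variable {ι : Type*} [Fintype ι] {θ : (ι → ℝ) → ι → Matrix ι ι ℝ}

theorem contDiff_applyPosition {r : WithTop ℕ∞} (hθ : ContDiff ℝ r θ) :
    ContDiff ℝ r (applyPosition θ) :=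
  contDiff_matrix_iff.2 fun a μ => ContDiff.sum fun b _ =>
    (contDiff_matrix_iff.1 (contDiff_pi.1 hθ μ) a b).mul (contDiff_apply ℝ ℝ b)

theorem radialDeriv_applyPosition (hθ : ContDiff ℝ ∞ θ) :
    radialDeriv (applyPosition θ) = applyPosition (radialDeriv θ + θ) := by
  have hd : Differentiable ℝ θ := hθ.differentiable (by simp)
  have hd' : Differentiable ℝ (applyPosition θ) :=
    (contDiff_applyPosition hθ).differentiable (by simp)
  have hcolumn (μ : ι) : Differentiable ℝ fun y => θ y μ *ᵥ y :=
    differentiable_pi.2 fun a => differentiable_matrix_iff.1 hd' a μ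
  funext x
  ext a μ
  calc radialDeriv (applyPosition θ) x a μ
      = radialDeriv (fun y => (θ y μ *ᵥ y) a) x := (fderiv_matrix_apply (hd' x) x a μ).symm
    _ = radialDeriv (fun y => θ y μ *ᵥ y) x a :=
        congrArg (· x) (fderiv_apply (hcolumn μ x) a)
    _ = (radialDeriv (fun y => θ y μ) x *ᵥ x + θ x μ *ᵥ x) a :=
        congrFun (fderiv_mulVec_self (differentiable_pi.1 hd μ x) x) a
    _ = applyPosition (radialDeriv θ + θ) x a μ := by
        rw [radialDeriv_apply hd, ← Matrix.add_mulVec]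
        rfl

variable {n : ℕ} {R : (Fin n → ℝ) → Fin n → Fin n → Matrix (Fin n) (Fin n) ℝ}

theorem ωOf_eq_radialAverage (hR : Continuous R) : ωOf R = radialAverage (contract R) := by
  have hcont : Continuous (contract R) := by
    unfold contract
    fun_prop
  funext x μ
  ext a b
  let entry : (Fin n → Matrix (Fin n) (Fin n) ℝ) →L[ℝ] ℝ :=
    (Matrix.entryLinearMap ℝ ℝ a b).toContinuousLinearMap.comp (.proj μ)
  calc ωOf R x μ a b = radialAverage (fun y => entry (contract R y)) x := by
        refine intervalIntegral.integral_congr fun t _ => ?_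
        simp [entry, contract, Finset.mul_sum, mul_assoc]
    _ = radialAverage (contract R) x μ a b := radialAverage_clm_comp entry hcont x

theorem eOf_eq_add_sub_radialAverage (hR : Continuous R) :
    eOf R = 1 + applyPosition (ωOf R) - radialAverage (applyPosition (contract R)) := by
  have hcont : Continuous (applyPosition (contract R)) :=
    contDiff_zero.1 (contDiff_applyPosition (contDiff_contract (contDiff_zero.2 hR)))
  funext x
  ext a μ
  let F (t : ℝ) : ℝ := ∑ b, ∑ ν, x b * x ν * R (t • x) ν μ a b
  have hF : Continuous F := by
    fun_prop
  have hcontract (t : ℝ) : (contract R (t • x) μ *ᵥ x) a = t * F t := by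
    simp only [Matrix.mulVec, dotProduct, contract, Finset.sum_apply, Pi.smul_apply,
      Matrix.sum_apply, Matrix.smul_apply, smul_eq_mul, F, Finset.sum_mul, Finset.mul_sum]
    exact Finset.sum_congr rfl fun b _ => Finset.sum_congr rfl fun ν _ => by ring
  have hfirst : applyPosition (ωOf R) x a μ = ∫ t in (0 : ℝ)..1, t * F t := by
    let applyTo : (Fin n → Matrix (Fin n) (Fin n) ℝ) →L[ℝ] ℝ := LinearMap.toContinuousLinearMap
      (.proj a ∘ₗ (Matrix.mulVecBilin ℝ ℝ).flip x ∘ₗ .proj μ)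
    rw [ωOf_eq_radialAverage hR]
    refine (radialAverage_clm_comp applyTo
      (contDiff_zero.1 (contDiff_contract (contDiff_zero.2 hR))) x).symm.trans ?_
    exact intervalIntegral.integral_congr fun t _ => hcontract t
  have hsecond : radialAverage (applyPosition (contract R)) x a μ =
      ∫ t in (0 : ℝ)..1, t ^ 2 * F t := by
    refine (radialAverage_clm_comp (Matrix.entryLinearMap ℝ ℝ a μ).toContinuousLinearMap
      hcont x).symm.trans ?_
    refine intervalIntegral.integral_congr fun t _ => ?_
    calc (contract R (t • x) μ *ᵥ (t • x)) a = t * (contract R (t • x) μ *ᵥ x) a := by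
          rw [Matrix.mulVec_smul, Pi.smul_apply, smul_eq_mul]
      _ = t ^ 2 * F t := by rw [hcontract, ← mul_assoc, sq]
  calc eOf R x a μ = (1 : Matrix (Fin n) (Fin n) ℝ) a μ
        + ∫ t in (0 : ℝ)..1, (t * F t - t ^ 2 * F t) := by
        refine congrArg _ (intervalIntegral.integral_congr fun t _ => ?_)
        simp only [smul_eq_mul]
        ring
    _ = (1 : Matrix (Fin n) (Fin n) ℝ) a μ + applyPosition (ωOf R) x a μ
        - radialAverage (applyPosition (contract R)) x a μ := by
        rw [intervalIntegral.integral_sub, hfirst, hsecond, add_sub_assoc] <;>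
          exact Continuous.intervalIntegrable (by fun_prop) _ _

end RadialFormulas

section RadialReconstruction

variable {n : ℕ} {R : (Fin n → ℝ) → Fin n → Fin n → Matrix (Fin n) (Fin n) ℝ}
  {w : (Fin n → ℝ) → Fin n → Matrix (Fin n) (Fin n) ℝ}
  {e : (Fin n → ℝ) → Matrix (Fin n) (Fin n) ℝ}

theorem contDiff_ωOf (hR : ContDiff ℝ ∞ R) : ContDiff ℝ ∞ (ωOf R) := by
  rw [ωOf_eq_radialAverage hR.continuous]
  exact contDiff_radialAverage (contDiff_contract hR)

theorem radialDeriv_ωOf_add_self (hR : ContDiff ℝ ∞ R) :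
    radialDeriv (ωOf R) + ωOf R = contract R := by
  rw [ωOf_eq_radialAverage hR.continuous]
  exact funext (radialDeriv_radialAverage_add_self (contDiff_contract hR))

theorem contDiff_eOf (hR : ContDiff ℝ ∞ R) : ContDiff ℝ ∞ (eOf R) := by
  rw [eOf_eq_add_sub_radialAverage hR.continuous]
  exact (contDiff_const.add (contDiff_applyPosition (contDiff_ωOf hR))).sub
    (contDiff_radialAverage (contDiff_applyPosition (contDiff_contract hR)))

theorem radialDeriv_eOf_add_self (hR : ContDiff ℝ ∞ R) :
    radialDeriv (eOf R) + eOf R = 1 + applyPosition (ωOf R) := by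
  have hposition : ContDiff ℝ ∞ (applyPosition (ωOf R)) := contDiff_applyPosition (contDiff_ωOf hR)
  have haverage : ContDiff ℝ ∞ (applyPosition (contract R)) :=
    contDiff_applyPosition (contDiff_contract hR)
  have hone : Differentiable ℝ (1 : (Fin n → ℝ) → Matrix (Fin n) (Fin n) ℝ) :=
    differentiable_const 1
  have hposition' : Differentiable ℝ (applyPosition (ωOf R)) := hposition.differentiable (by simp)
  have haverage' : Differentiable ℝ (radialAverage (applyPosition (contract R))) :=
    (contDiff_radialAverage haverage).differentiable (by simp)
  funext x
  have hone_radial : radialDeriv (1 : (Fin n → ℝ) → Matrix (Fin n) (Fin n) ℝ) x = 0 :=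
    congrArg (· x)
      (fderiv_const_apply (𝕜 := ℝ) (1 : Matrix (Fin n) (Fin n) ℝ))
  have hradial : radialDeriv (applyPosition (ωOf R)) x = applyPosition (contract R) x := by
    rw [radialDeriv_applyPosition (contDiff_ωOf hR), radialDeriv_ωOf_add_self hR]
  rw [Pi.add_apply, eOf_eq_add_sub_radialAverage hR.continuous,
    radialDeriv_sub ((hone x).add (hposition' x)) (haverage' x),
    radialDeriv_add (hone x) (hposition' x), hone_radial, hradial,
    ← radialDeriv_radialAverage_add_self haverage x]
  simp only [Pi.sub_apply, Pi.add_apply]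
  abel

theorem contract_ωOf (hR : ContDiff ℝ ∞ R) (hantisymm : ∀ x μ ν, R x μ ν = -R x ν μ) :
    contract (ωOf R) = 0 := by
  have hdouble : contract (contract R) = 0 := by
    funext x
    have hneg : contract (contract R) x = -contract (contract R) x := by
      have hsum : contract (contract R) x = ∑ μ, ∑ ν, x μ • x ν • R x ν μ := by
        simp only [contract, Finset.sum_apply, Pi.smul_apply, Finset.smul_sum]
      calc contract (contract R) x = ∑ ν, ∑ μ, x μ • x ν • R x ν μ := by
            rw [hsum, Finset.sum_comm]
        _ = ∑ ν, ∑ μ, -(x ν • x μ • R x μ ν) :=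
            Finset.sum_congr rfl fun ν _ => Finset.sum_congr rfl fun μ _ => by
              rw [hantisymm x ν μ, smul_neg, smul_neg, smul_comm]
        _ = -contract (contract R) x := by simp only [hsum, Finset.sum_neg_distrib]
    ext a b
    exact self_eq_neg.1 (congrFun (congrFun hneg a) b)
  have hω := contDiff_ωOf hR
  funext x
  rw [eq_apply_zero_of_radialDeriv_eq_zero ((contDiff_contract hω).of_le (by simp)) fun y => ?_]
  · simp [contract]
  · rw [radialDeriv_contract (hω.differentiable (by simp)), radialDeriv_ωOf_add_self hR, hdouble,
      Pi.zero_apply]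

theorem transpose_ωOf (hskew : ∀ x μ ν, (R x μ ν)ᵀ = -R x μ ν) (x : Fin n → ℝ) (μ : Fin n) :
    (ωOf R x μ)ᵀ = -ωOf R x μ := by
  ext a b
  have hentry (y : Fin n → ℝ) (ν : Fin n) : R y ν μ b a = -R y ν μ a b :=
    congrFun (congrFun (hskew y ν μ) a) b
  simp only [ωOf, Matrix.transpose_apply, Matrix.neg_apply, Matrix.of_apply, hentry, mul_neg,
    Finset.sum_neg_distrib, smul_neg, intervalIntegral.integral_neg]

theorem eOf_mulVec_self (hR : ContDiff ℝ ∞ R) (hantisymm : ∀ x μ ν, R x μ ν = -R x ν μ)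
    (x : Fin n → ℝ) : eOf R x *ᵥ x = x := by
  refine mulVec_self_of_radialDeriv_add ((contDiff_eOf hR).of_le (by simp)) (fun y => ?_) x
  rw [← Pi.add_apply, radialDeriv_eOf_add_self hR, Pi.add_apply, Matrix.add_mulVec,
    applyPosition_mulVec_self, contract_ωOf hR hantisymm, Pi.zero_apply, Matrix.zero_mulVec,
    add_zero]
  exact Matrix.one_mulVec y

theorem ωOf_eq_of_contract_eq (hw : ContDiff ℝ ∞ w) (hR : ContDiff ℝ ∞ R)
    (h : radialDeriv w + w = contract R) : ωOf R = w :=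
  eq_of_radialDeriv_add_self_eq ((contDiff_ωOf hR).differentiable (by simp))
    (hw.differentiable (by simp)) (congrFun ((radialDeriv_ωOf_add_self hR).trans h.symm))

theorem eOf_eq_of_radialDeriv_add_self_eq (he : ContDiff ℝ ∞ e) (hR : ContDiff ℝ ∞ R)
    (h : radialDeriv e + e = 1 + applyPosition (ωOf R)) : eOf R = e :=
  eq_of_radialDeriv_add_self_eq ((contDiff_eOf hR).differentiable (by simp))
    (he.differentiable (by simp)) (congrFun ((radialDeriv_eOf_add_self hR).trans h.symm))

end RadialReconstruction

section BianchiCurvature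

variable {n : ℕ} {R : (Fin n → ℝ) → Fin n → Fin n → Matrix (Fin n) (Fin n) ℝ}
  {w : (Fin n → ℝ) → Fin n → Matrix (Fin n) (Fin n) ℝ}
  {e : (Fin n → ℝ) → Matrix (Fin n) (Fin n) ℝ}

theorem sum_mul_add_mul_add_mul_apply (x : Fin n → ℝ) (μ ν ρ a : Fin n) :
    ∑ b, (R x μ ν a b * e x b ρ + R x ν ρ a b * e x b μ + R x ρ μ a b * e x b ν) =
      (R x μ ν * coframe e x ρ + R x ν ρ * coframe e x μ + R x ρ μ * coframe e x ν) a () := by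
  simp only [Finset.sum_add_distrib]
  rfl

theorem extCovDerivTwo_apply (hR : Differentiable ℝ R) (x : Fin n → ℝ) (μ ν ρ a b : Fin n) :
    extCovDerivTwo w w R x μ ν ρ a b =
      pd μ (fun y => R y ν ρ a b) x + pd ν (fun y => R y ρ μ a b) x
        + pd ρ (fun y => R y μ ν a b) x
        + ∑ c, (w x μ a c * R x ν ρ c b - R x ν ρ a c * w x μ c b
          + w x ν a c * R x ρ μ c b - R x ρ μ a c * w x ν c b
          + w x ρ a c * R x μ ν c b - R x μ ν a c * w x ρ c b) := by
  have hpd (α β γ : Fin n) :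
      pd α (fun y => R y β γ a b) x = partialDeriv α (fun y => R y β γ) x a b :=
    fderiv_matrix_apply (differentiable_pi.1 (differentiable_pi.1 hR β) γ x) _ a b
  simp only [hpd, extCovDerivTwo, covDeriv, Matrix.add_apply, Matrix.sub_apply,
    Matrix.mul_apply, Finset.sum_add_distrib, Finset.sum_sub_distrib]
  ring

/-- Matrix form of membership in `CurvatureSet n`. -/
structure IsBianchiCurvature (R : (Fin n → ℝ) → Fin n → Fin n → Matrix (Fin n) (Fin n) ℝ) :
    Prop where
  contDiff : ContDiff ℝ ∞ R
  antisymm : ∀ x μ ν, R x μ ν = -R x ν μ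
  skew : ∀ x μ ν, (R x μ ν)ᵀ = -R x μ ν
  first_bianchi : ∀ x μ ν ρ, R x μ ν * coframe (eOf R) x ρ + R x ν ρ * coframe (eOf R) x μ
    + R x ρ μ * coframe (eOf R) x ν = 0
  second_bianchi : extCovDerivTwo (ωOf R) (ωOf R) R = 0
  isUnit : ∀ x, IsUnit (eOf R x)

theorem mem_curvatureSet_iff : R ∈ CurvatureSet n ↔ IsBianchiCurvature R := by
  have hcontDiff : (∀ μ ν a b, ContDiff ℝ ∞ fun x => R x μ ν a b) ↔ ContDiff ℝ ∞ R := by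
    simp only [contDiff_pi, contDiff_matrix_iff]
  constructor
  · rintro ⟨hsmooth, hantisymm, hskew, hbianchi, hbianchi', hunit⟩
    have hR := hcontDiff.1 hsmooth
    refine ⟨hR, fun x μ ν => ?_, fun x μ ν => ?_, fun x μ ν ρ => ?_, ?_, hunit⟩
    · ext a b
      exact hantisymm x μ ν a b
    · ext a b
      exact hskew x μ ν b a
    · ext a u
      exact (sum_mul_add_mul_add_mul_apply x μ ν ρ a).symm.trans (hbianchi x μ ν ρ a)
    · funext x μ ν ρ
      ext a b
      exact (extCovDerivTwo_apply (hR.differentiable (by simp)) x μ ν ρ a b).trans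
        (hbianchi' x μ ν ρ a b)
  · intro h
    refine ⟨hcontDiff.2 h.contDiff, fun x μ ν a b => ?_, fun x μ ν a b => ?_,
      fun x μ ν ρ a => ?_, fun x μ ν ρ a b => ?_, h.isUnit⟩
    · exact congrFun (congrFun (h.antisymm x μ ν) a) b
    · exact congrFun (congrFun (h.skew x μ ν) b) a
    · rw [sum_mul_add_mul_add_mul_apply, h.first_bianchi]
      rfl
    · rw [← extCovDerivTwo_apply (h.contDiff.differentiable (by simp)), h.second_bianchi]
      rfl

namespace IsBianchiCurvature

theorem contract_ωOf_eq_zero (h : IsBianchiCurvature R) : contract (ωOf R) = 0 :=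
  contract_ωOf h.contDiff h.antisymm

theorem extCovDeriv_ωOf (h : IsBianchiCurvature R) : extCovDeriv (ωOf R) (ωOf R) = R := by
  have hω := contDiff_ωOf h.contDiff
  have hcurvature : Differentiable ℝ (extCovDeriv (ωOf R) (ωOf R)) :=
    (contDiff_extCovDeriv hω hω).differentiable (by simp)
  have hR : Differentiable ℝ R := h.contDiff.differentiable (by simp)
  refine sub_eq_zero.1 (eq_zero_of_extCovDerivTwo_eq_zero h.contract_ωOf_eq_zero
    h.contract_ωOf_eq_zero (hcurvature.sub hR) (fun x μ ν => ?_) ?_ ?_)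
  · simp only [Pi.sub_apply, extCovDeriv_antisymm _ _ x μ ν, h.antisymm x μ ν]
    abel
  · have hcontract : contract (extCovDeriv (ωOf R) (ωOf R)) = contract R := by
      funext x ν
      rw [contract_extCovDeriv (hω.differentiable (by simp)), h.contract_ωOf_eq_zero,
        ← radialDeriv_ωOf_add_self h.contDiff]
      simp [partialDeriv]
    funext x
    simp only [contract, Pi.sub_apply, smul_sub, Finset.sum_sub_distrib]
    exact sub_eq_zero.2 (congrFun hcontract x)
  · rw [extCovDerivTwo_sub hcurvature hR, extCovDerivTwo_curvature hω, h.second_bianchi, sub_zero]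

theorem torsion_eq_zero (h : IsBianchiCurvature R) : torsion (ωOf R) (eOf R) = 0 := by
  have hω := contDiff_ωOf h.contDiff
  have he := contDiff_eOf h.contDiff
  have hcoframe : ContDiff ℝ ∞ (coframe (eOf R)) := contDiff_coframe he
  have hzero : contract (0 : (Fin n → ℝ) → Fin n → Matrix Unit Unit ℝ) = 0 := by
    funext x
    simp [contract]
  refine eq_zero_of_extCovDerivTwo_eq_zero h.contract_ωOf_eq_zero hzero
    ((contDiff_extCovDeriv hω hcoframe).differentiable (by simp)) (extCovDeriv_antisymm _ _) ?_ ?_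
  · rw [contract_torsion (he.differentiable (by simp)) (eOf_mulVec_self h.contDiff h.antisymm),
      radialDeriv_eOf_add_self h.contDiff, h.contract_ωOf_eq_zero, zero_mul, add_zero, sub_self]
    rfl
  · funext x μ ν ρ
    rw [torsion, extCovDerivTwo_extCovDeriv hω hcoframe, h.extCovDeriv_ωOf, h.first_bianchi]
    rfl

theorem isRadialCartanPair (h : IsBianchiCurvature R) : IsRadialCartanPair (ωOf R) (eOf R) where
  contDiff_connection := contDiff_ωOf h.contDiff
  contDiff_vielbein := contDiff_eOf h.contDiff
  isUnit := h.isUnit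
  skew := transpose_ωOf h.skew
  torsion_eq_zero := h.torsion_eq_zero
  contract_eq_zero := h.contract_ωOf_eq_zero
  mulVec_self := eOf_mulVec_self h.contDiff h.antisymm

end IsBianchiCurvature

namespace IsRadialCartanPair

theorem ωOf_curvature (h : IsRadialCartanPair w e) : ωOf (extCovDeriv w w) = w := by
  have hw := h.contDiff_connection
  refine ωOf_eq_of_contract_eq hw (contDiff_extCovDeriv hw hw) ?_
  funext x ν
  rw [contract_extCovDeriv (hw.differentiable (by simp)), h.contract_eq_zero]
  simp [partialDeriv]

theorem eOf_curvature (h : IsRadialCartanPair w e) : eOf (extCovDeriv w w) = e := by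
  have hw := h.contDiff_connection
  refine eOf_eq_of_radialDeriv_add_self_eq h.contDiff_vielbein (contDiff_extCovDeriv hw hw) ?_
  rw [h.ωOf_curvature, h.radialDeriv_add_self]

theorem transpose_curvature (h : IsRadialCartanPair w e) (x : Fin n → ℝ) (μ ν : Fin n) :
    (extCovDeriv w w x μ ν)ᵀ = -extCovDeriv w w x μ ν := by
  have hpartial (α β : Fin n) : (partialDeriv α (fun y => w y β) x)ᵀ =
      -partialDeriv α (fun y => w y β) x := by
    calc (partialDeriv α (fun y => w y β) x)ᵀ = partialDeriv α (fun y => (w y β)ᵀ) x :=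
          (fderiv_matrix_transpose _ _ _).symm
      _ = partialDeriv α (fun y => -w y β) x := by simp only [h.skew]
      _ = -partialDeriv α (fun y => w y β) x := 
          congrArg (· (Pi.single α 1)) (fderiv_fun_neg (𝕜 := ℝ) (f := fun y => w y β) (x := x))
  simp only [extCovDeriv, Matrix.transpose_sub, Matrix.transpose_add, Matrix.transpose_mul,
    hpartial, h.skew, Matrix.neg_mul, Matrix.mul_neg]
  abel

theorem isBianchiCurvature (h : IsRadialCartanPair w e) :
    IsBianchiCurvature (extCovDeriv w w) where
  contDiff := contDiff_extCovDeriv h.contDiff_connection h.contDiff_connection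
  antisymm := extCovDeriv_antisymm w w
  skew := h.transpose_curvature
  first_bianchi x μ ν ρ := by
    rw [h.eOf_curvature, ← extCovDerivTwo_extCovDeriv h.contDiff_connection
      (contDiff_coframe h.contDiff_vielbein), ← torsion, h.torsion_eq_zero]
    simp [extCovDerivTwo, covDeriv, partialDeriv]
  second_bianchi := by
    rw [h.ωOf_curvature, extCovDerivTwo_curvature h.contDiff_connection]
  isUnit := by
    rw [h.eOf_curvature]
    exact h.isUnit

end IsRadialCartanPair

theorem bijOn_eOf : Set.BijOn eOf (CurvatureSet n) {e | IsNormalVielbein e} := by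
  refine ⟨fun R hR => (mem_curvatureSet_iff.1 hR).isRadialCartanPair.isNormalVielbein,
    fun R hR R' hR' heq => ?_, fun e he => ?_⟩
  · have hR := mem_curvatureSet_iff.1 hR
    have hR' := mem_curvatureSet_iff.1 hR'
    have hω : ωOf R = ωOf R' := by
      rw [hR.isRadialCartanPair.eq_leviCivita, hR'.isRadialCartanPair.eq_leviCivita, heq]
    rw [← hR.extCovDeriv_ωOf, ← hR'.extCovDeriv_ωOf, hω]
  · have h := IsNormalVielbein.isRadialCartanPair_leviCivita he
    exact ⟨_, mem_curvatureSet_iff.2 h.isBianchiCurvature, h.eOf_curvature⟩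

end BianchiCurvature

section Gram

variable {ι : Type*} [Fintype ι] [DecidableEq ι] {e f : (ι → ℝ) → Matrix ι ι ℝ}

namespace IsNormalVielbein

theorem apply_zero (h : IsNormalVielbein e) : e 0 = 1 := by
  refine Matrix.ext_of_mulVec_single fun ν => ?_
  rw [Matrix.one_mulVec]
  simpa only [Matrix.mulVec_zero, zero_add] using fderiv_mulVec_add_mulVec_of_mulVec_self
    (h.contDiff.differentiable (by simp)) h.mulVec_self 0 (Pi.single ν 1)

theorem two_smul_transpose_mul_radialDeriv_add_self (h : IsNormalVielbein e) (x : ι → ℝ) :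
    (2 : ℝ) • ((e x)ᵀ * (radialDeriv e x + e x)) =
      radialDeriv (fun y => (e y)ᵀ * e y) x + (2 : ℝ) • ((e x)ᵀ * e x) := by
  have he : DifferentiableAt ℝ e x := h.contDiff.differentiable (by simp) x
  have htranspose : DifferentiableAt ℝ (fun y => (e y)ᵀ) x :=
    (contDiff_matrix_transpose h.contDiff).differentiable (by simp) x
  have hgram : radialDeriv (fun y => (e y)ᵀ * e y) x =
      (radialDeriv e x)ᵀ * e x + (e x)ᵀ * radialDeriv e x := by
    rw [← radialDeriv_transpose]
    exact fderiv_matrix_mul htranspose he x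
  have hsymm : (radialDeriv e x + e x)ᵀ * e x = (e x)ᵀ * (radialDeriv e x + e x) := by
    simpa only [Matrix.transpose_mul, Matrix.transpose_transpose] using (h.isSymm x).eq
  rw [two_smul, hgram]
  nth_rw 1 [← hsymm]
  rw [Matrix.transpose_add, Matrix.add_mul, Matrix.mul_add]
  module

/-- The transition matrix `O = f e⁻¹` satisfies `fᵀ (x ^ μ ∂_μ O) e = 0`, because the symmetric
matrix `eᵀ (x ^ μ ∂_μ e + e)` is determined by `eᵀ e`. -/
theorem eq_of_transpose_mul_self_eq (he : IsNormalVielbein e) (hf : IsNormalVielbein f)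
    (h : ∀ x, (e x)ᵀ * e x = (f x)ᵀ * f x) : e = f := by
  let O : (ι → ℝ) → Matrix ι ι ℝ := fun x => f x * (e x)⁻¹
  have hO : ContDiff ℝ ∞ O :=
    contDiff_matrix_mul hf.contDiff (contDiff_matrix_inv he.contDiff he.isUnit)
  have hdet (x : ι → ℝ) : IsUnit (e x).det := (Matrix.isUnit_iff_isUnit_det _).1 (he.isUnit x)
  have hfactor : f = fun x => O x * e x :=
    funext fun x => (Matrix.nonsing_inv_mul_cancel_right _ _ (hdet x)).symm
  have hcomp (x : ι → ℝ) : (f x)ᵀ * O x = (e x)ᵀ := by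
    rw [← Matrix.mul_assoc, ← h, Matrix.mul_nonsing_inv_cancel_right _ _ (hdet x)]
  have hradial (x : ι → ℝ) : radialDeriv f x = radialDeriv O x * e x + O x * radialDeriv e x :=
    (congrArg (radialDeriv · x) hfactor).trans
      (fderiv_matrix_mul (hO.differentiable (by simp) x)
        (he.contDiff.differentiable (by simp) x) x)
  have hsymmPart (x : ι → ℝ) :
      (e x)ᵀ * (radialDeriv e x + e x) = (f x)ᵀ * (radialDeriv f x + f x) := by
    refine smul_right_injective _ (two_ne_zero (α := ℝ)) ?_
    simp only [two_smul_transpose_mul_radialDeriv_add_self he,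
      two_smul_transpose_mul_radialDeriv_add_self hf, h]
  have hconst (x : ι → ℝ) : radialDeriv O x = 0 := by
    rw [← (he.isUnit x).mul_left_eq_zero,
      ← ((Matrix.isUnit_transpose (f x)).2 (hf.isUnit x)).mul_right_eq_zero]
    calc (f x)ᵀ * (radialDeriv O x * e x)
        = (f x)ᵀ * (radialDeriv f x + f x) - (f x)ᵀ * O x * (radialDeriv e x + e x) := by
          rw [Matrix.mul_assoc, ← Matrix.mul_sub, hradial, congrFun hfactor x, Matrix.mul_add (O x)]
          congr 1
          abel
      _ = 0 := by rw [hcomp, hsymmPart, sub_self]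
  funext x
  rw [congrFun hfactor x, eq_apply_zero_of_radialDeriv_eq_zero (hO.of_le (by simp)) hconst]
  simp [O, he.apply_zero, hf.apply_zero]

end IsNormalVielbein

end Gram

section NormalMetric

variable {n : ℕ} {e : (Fin n → ℝ) → Matrix (Fin n) (Fin n) ℝ}

theorem sum_mul_pd_eq_radialDeriv {x : Fin n → ℝ} (he : DifferentiableAt ℝ e x) (a μ : Fin n) :
    ∑ ν, x ν * pd ν (fun y => e y a μ) x = radialDeriv e x a μ :=
  (radialDeriv_eq_sum_partialDeriv (fun y => e y a μ) x).symm.trans (fderiv_matrix_apply he x a μ)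

theorem isNormalVielbein_iff : IsNormalVielbein e ↔
    (∀ a μ, ContDiff ℝ ∞ fun x => e x a μ)
    ∧ (∀ x, IsUnit (e x))
    ∧ (∀ x a, ∑ μ, x μ * e x a μ = x a)
    ∧ (∀ x μ, ∑ a, x a * e x a μ = x μ)
    ∧ ∀ x a b, ∑ μ, (e x)⁻¹ μ a * ((∑ ν, x ν * pd ν (fun y => e y b μ) x) + e x b μ)
        = ∑ μ, (e x)⁻¹ μ b * ((∑ ν, x ν * pd ν (fun y => e y a μ) x) + e x a μ) := by
  have hmulVec : (∀ x a, ∑ μ, x μ * e x a μ = x a) ↔ ∀ x, e x *ᵥ x = x := by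
    simp only [funext_iff, Matrix.mulVec, dotProduct, mul_comm]
  have hvecMul : (∀ x μ, ∑ a, x a * e x a μ = x μ) ↔ ∀ x, x ᵥ* e x = x := by
    simp only [funext_iff, Matrix.vecMul, dotProduct]
  have hsymm (he : ContDiff ℝ ∞ e) (hunit : ∀ x, IsUnit (e x)) :
      (∀ x a b, ∑ μ, (e x)⁻¹ μ a * ((∑ ν, x ν * pd ν (fun y => e y b μ) x) + e x b μ)
        = ∑ μ, (e x)⁻¹ μ b * ((∑ ν, x ν * pd ν (fun y => e y a μ) x) + e x a μ)) ↔
      ∀ x, ((e x)ᵀ * (radialDeriv e x + e x)).IsSymm := by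
    have hsum (x : Fin n → ℝ) (a b : Fin n) :
        ∑ μ, (e x)⁻¹ μ a * ((∑ ν, x ν * pd ν (fun y => e y b μ) x) + e x b μ) =
          ((radialDeriv e x + e x) * (e x)⁻¹) b a := by
      simp only [sum_mul_pd_eq_radialDeriv (he.differentiable (by simp) x), Matrix.mul_apply,
        Matrix.add_apply, mul_comm]
    simp only [hsum, ← isSymm_mul_inv_iff (hunit _), Matrix.IsSymm.ext_iff]
  rw [← contDiff_matrix_iff, hmulVec, hvecMul]
  constructor
  · intro h
    exact ⟨h.contDiff, h.isUnit, h.mulVec_self, h.vecMul_self,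
      (hsymm h.contDiff h.isUnit).2 h.isSymm⟩
  · rintro ⟨hsmooth, hunit, hone, htwo, hthree⟩
    exact ⟨hsmooth, hunit, hone, htwo, (hsymm hsmooth hunit).1 hthree⟩

theorem IsNormalVielbein.transpose_mul_self_mem_normalMetricSet (h : IsNormalVielbein e) :
    (fun x => (e x)ᵀ * e x) ∈ NormalMetricSet n := by
  obtain ⟨hsmooth, hunit, hone, htwo, hthree⟩ := isNormalVielbein_iff.1 h
  refine ⟨contDiff_matrix_iff.1 (contDiff_matrix_mul (contDiff_matrix_transpose h.contDiff)
    h.contDiff), fun x μ ν => ?symm, fun x => ?posDef, fun x ν => ?position,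
    e, hsmooth, hunit, hone, htwo, hthree, fun x μ ν => rfl⟩
  case symm => exact congrFun (congrFun (Matrix.isSymm_transpose_mul_self (e x)) ν) μ
  case posDef =>
    simpa only [Matrix.conjTranspose_eq_transpose_of_trivial] using
      Matrix.PosDef.conjTranspose_mul_self _ (Matrix.mulVec_injective_of_isUnit (h.isUnit x))
  case position =>
    have hx : x ᵥ* ((e x)ᵀ * e x) = x := by
      rw [← Matrix.vecMul_vecMul, Matrix.vecMul_transpose, h.mulVec_self, h.vecMul_self]
    exact congrFun hx ν

theorem bijOn_transpose_mul_self :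
    Set.BijOn (fun (e : (Fin n → ℝ) → Matrix (Fin n) (Fin n) ℝ) x => (e x)ᵀ * e x)
      {e | IsNormalVielbein e} (NormalMetricSet n) := by
  refine ⟨fun e he => IsNormalVielbein.transpose_mul_self_mem_normalMetricSet he,
    fun e he f hf h => IsNormalVielbein.eq_of_transpose_mul_self_eq he hf (congrFun h), ?_⟩
  rintro g ⟨-, -, -, -, e, hsmooth, hunit, hone, htwo, hthree, hg⟩
  refine ⟨e, isNormalVielbein_iff.2 ⟨hsmooth, hunit, hone, htwo, hthree⟩, ?_⟩
  funext x
  ext μ ν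
  exact (hg x μ ν).symm

end NormalMetric

/-- main theorem: the map `R ↦ g`, `g_{μν} = ∑_a e^a_μ e^a_ν` with
`e^a_μ(x) = δ^a_μ + ∫₀¹ t(1−t) ∑_{b,ρ} x^b x^ρ R^a_{bρμ}(tx) dt`, is a bijection from the
set of smooth antisymmetric curvatures satisfying the 1st and 2nd Bianchi identities for
curvature (with pointwise-invertible associated vielbein) onto the set of metrics in
normal coordinates arising from vielbeins satisfying conditions (one)–(three). -/
theorem curvature_metric_bijection {n : ℕ} (hn : 1 ≤ n) :
    Set.BijOn (metOf (n := n)) (CurvatureSet n) (NormalMetricSet n) :=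
  bijOn_transpose_mul_self.comp bijOn_eOf
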